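/- arXiv:2501.06840 — 3 statements merged into one kernel-verified Lean document; each statement's English description precedes it below -/
import Mathlib

section
/- Let n ≥ 3 and let φ : M_n → M_n be a continuous, commutativity-preserving and spectrum-shrinking map. Then there exists T ∈ GL(n) such that either φ(X) = T X T⁻¹ for all X ∈ M_n, or φ(X) = T Xᵗ T⁻¹ for all X ∈ M_n (where Xᵗ denotes the transpose). (This strengthens Šemrl's theorem, which assumes φ is spectrum-preserving.) -/
open Matrix

/-!
Matrices `S * diagonal d * S⁻¹` with `d` injective are parametrized by a connected set of pairs
`(S, d)`. The spectrum of their image under `φ` is a multiset of entries of `d`, which by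
connectedness is the same for all `(S, d)`; since `d` may be permuted by changing `S`, every entry
of `d` occurs. Together with commutativity this gives, for each `S`, a matrix `T` such that
`φ (S * diagonal d * S⁻¹) = T * diagonal d * T⁻¹` for all `d`. By density `φ` commutes with
polynomial functional calculus, so it is homogeneous, preserves squares and is additive on pairs of
orthogonal idempotents.

Decomposing one matrix into orthogonal rank one idempotents in two ways shows that, in dimension at
least three, `x ↦ φ (vecMulVec x f)` has constant increments along lines in the hyperplane
`f ⬝ᵥ x = 1`; being homogeneous and continuous, it is additive. So `φ` agrees with a linear map on
matrices of rank one, hence on each set `{S * diagonal d * S⁻¹ | d}`, hence everywhere by density.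

After conjugation `φ` is a Jordan homomorphism fixing diagonal matrices. It maps each matrix unit
`single i j 1` to a combination of `single i j 1` and `single j i 1`, and the Jordan relations make
the same one of the two coefficients vanish for all `i ≠ j`.
-/

open Polynomial Function

/-! ### Linewise Zariski open sets -/

section LinewiseZariskiOpen

/-- A set which meets every affine line `{a + c • b}` in a Zariski open subset of the line. This
weak form of Zariski openness makes sense without coordinates and is enough for connectedness and
density over `ℂ`. -/
def IsLinewiseZariskiOpen (R : Type*) {E : Type*} [CommSemiring R] [Add E] [SMul R E]
    (V : Set E) : Prop :=
  ∀ a b : E, ∃ p : R[X], ∀ c : R, a + c • b ∈ V ↔ p.eval c ≠ 0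

namespace IsLinewiseZariskiOpen

theorem iInter {R E ι : Type*} [CommSemiring R] [NoZeroDivisors R] [Nontrivial R] [Add E]
    [SMul R E] [Finite ι] {V : ι → Set E} (hV : ∀ i, IsLinewiseZariskiOpen R (V i)) :
    IsLinewiseZariskiOpen R (⋂ i, V i) := by
  intro a b
  cases nonempty_fintype ι
  choose p hp using fun i ↦ hV i a b
  exact ⟨∏ i, p i, fun c ↦ by simp [hp, eval_prod, Finset.prod_ne_zero_iff]⟩

theorem prod {R E F : Type*} [CommSemiring R] [NoZeroDivisors R] [Add E] [SMul R E] [Add F]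
    [SMul R F] {V : Set E} {W : Set F} (hV : IsLinewiseZariskiOpen R V)
    (hW : IsLinewiseZariskiOpen R W) : IsLinewiseZariskiOpen R (V ×ˢ W) := by
  intro a b
  obtain ⟨p, hp⟩ := hV a.1 b.1
  obtain ⟨q, hq⟩ := hW a.2 b.2
  exact ⟨p * q, fun c ↦ by simp [hp, hq]⟩

variable {E : Type*} [AddCommGroup E] [Module ℂ E] {V : Set E}

theorem countable_compl (hV : IsLinewiseZariskiOpen ℂ V) {a b : E} {c₀ : ℂ}
    (h : a + c₀ • b ∈ V) : {c : ℂ | a + c • b ∉ V}.Countable := by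
  obtain ⟨p, hp⟩ := hV a b
  have hp0 : p ≠ 0 := by rintro rfl; simp [hp] at h
  refine (p.roots.toFinset.finite_toSet.subset fun c hc ↦ ?_).countable
  simpa [hp0, hp] using hc

variable [TopologicalSpace E] [ContinuousAdd E] [ContinuousSMul ℂ E]

theorem isPreconnected (hV : IsLinewiseZariskiOpen ℂ V) : IsPreconnected V := by
  refine isPreconnected_of_forall_pair fun a ha b hb ↦ ?_
  have hline : IsConnected {c : ℂ | a + c • (b - a) ∉ V}ᶜ :=
    (hV.countable_compl (c₀ := 0) (by simpa)).isConnected_compl_of_one_lt_rank (by simp)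
  refine ⟨(fun c : ℂ ↦ a + c • (b - a)) '' {c : ℂ | a + c • (b - a) ∉ V}ᶜ, ?_,
    ⟨0, by simpa using ha, by simp⟩, ⟨1, by simpa using hb, by simp⟩,
    hline.isPreconnected.image _ (by fun_prop)⟩
  rintro _ ⟨c, hc, rfl⟩
  simpa using hc

theorem dense (hV : IsLinewiseZariskiOpen ℂ V) (hne : V.Nonempty) : Dense V := by
  intro a
  obtain ⟨b, hb⟩ := hne
  have hline : Dense {c : ℂ | a + c • (b - a) ∉ V}ᶜ :=
    (hV.countable_compl (c₀ := 1) (by simpa)).dense_compl ℂ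
  have := map_mem_closure (f := fun c : ℂ ↦ a + c • (b - a)) (t := V) (by fun_prop) (hline 0)
    fun c hc ↦ by simpa using hc
  simpa using this

end IsLinewiseZariskiOpen

variable {R n : Type*}

theorem isLinewiseZariskiOpen_injective [CommRing R] [IsDomain R] [Finite n] :
    IsLinewiseZariskiOpen R {d : n → R | Injective d} := by
  have : {d : n → R | Injective d} = ⋂ i, ⋂ j, {d | d i = d j → i = j} := by
    ext; simp [Injective]
  rw [this]
  refine .iInter fun i ↦ .iInter fun j a b ↦ ?_
  by_cases hij : i = j
  · exact ⟨1, by simp [hij]⟩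
  · refine ⟨C (a i - a j) + X * C (b i - b j), fun c ↦ ?_⟩
    have : a i - a j + c * (b i - b j) = a i + c * b i - (a j + c * b j) := by ring
    simp [hij, this, sub_eq_zero]

theorem map_eval_pencil [CommRing R] (A B : Matrix n n R) (c : R) :
    (A.map C + (X : R[X]) • B.map C).map (evalRingHom c) = A + c • B := by
  ext i j
  simp [mul_comm c]

variable [Fintype n] [DecidableEq n]

theorem isLinewiseZariskiOpen_isUnit {K : Type*} [Field K] :
    IsLinewiseZariskiOpen K {A : Matrix n n K | IsUnit A} := by
  refine fun A B ↦ ⟨(A.map C + (X : K[X]) • B.map C).det, fun c ↦ ?_⟩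
  rw [← coe_evalRingHom, RingHom.map_det, RingHom.mapMatrix_apply, map_eval_pencil,
    Set.mem_ofPred_eq, isUnit_iff_isUnit_det, isUnit_iff_ne_zero]

theorem isLinewiseZariskiOpen_charpoly_separable {K : Type*} [Field K] [CharZero K] :
    IsLinewiseZariskiOpen K {A : Matrix n n K | A.charpoly.Separable} := by
  intro A B
  refine ⟨resultant (A.map C + (X : K[X]) • B.map C).charpoly
    (A.map C + (X : K[X]) • B.map C).charpoly.derivative (Fintype.card n) (Fintype.card n - 1),
    fun c ↦ ?_⟩
  have hdeg : (A + c • B).charpoly.natDegree = Fintype.card n := charpoly_natDegree_eq_dim _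
  have hres := resultant_eq_zero_iff (f := (A + c • B).charpoly)
    (g := (A + c • B).charpoly.derivative)
  rw [natDegree_derivative, hdeg] at hres
  rw [← coe_evalRingHom, ← resultant_map_map, ← derivative_map, ← charpoly_map, map_eval_pencil,
    Ne, hres]
  simp [Polynomial.Separable, (charpoly_monic _).ne_zero]

end LinewiseZariskiOpen

theorem eq_of_mem_range_of_isPreconnected {X Y ι : Type*} [TopologicalSpace X]
    [TopologicalSpace Y] [T2Space Y] [Finite ι] {s : Set X} (hs : IsPreconnected s) {f : X → Y}
    {g : ι → X → Y} (hf : ContinuousOn f s) (hg : ∀ i, ContinuousOn (g i) s)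
    (hfg : ∀ x ∈ s, ∃ i, f x = g i x) (hinj : ∀ x ∈ s, Injective fun i ↦ g i x) {i : ι} {x₀ : X}
    (hx₀ : x₀ ∈ s) (h₀ : f x₀ = g i x₀) : s.EqOn f (g i) := by
  have := isPreconnected_iff_preconnectedSpace.1 hs
  have hclosed (j : ι) : IsClosed {x : s | f x = g j x} :=
    isClosed_eq hf.domRestrict (hg j).domRestrict
  have hcompl : {x : s | f x = g i x}ᶜ = ⋃ j ∈ {j | j ≠ i}, {x : s | f x = g j x} := by
    ext x
    obtain ⟨k, hk⟩ := hfg x x.2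
    have hjk (j : ι) : g k x = g j x ↔ k = j := (hinj x x.2).eq_iff
    simp [hk, hjk]
  have hclopen : IsClopen {x : s | f x = g i x} := by
    refine ⟨hclosed i, ?_⟩
    rw [← isClosed_compl_iff, hcompl]
    exact (Set.toFinite _).isClosed_biUnion fun j _ ↦ hclosed j
  intro x hx
  exact (Set.eq_univ_iff_forall.1 (hclopen.eq_univ ⟨⟨x₀, hx₀⟩, h₀⟩)) ⟨x, hx⟩


/-! ### Diagonalizable matrices -/

section Diagonalization

variable {R K n : Type*} [CommRing R] [Field K] [Fintype n] [DecidableEq n]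

/-- The algebra homomorphism `d ↦ S * diagonal d * S⁻¹`, whose range consists of the matrices that
the columns of `S` diagonalize. -/
noncomputable def conjDiagonal (S : (Matrix n n R)ˣ) : (n → R) →ₐ[R] Matrix n n R :=
  (MulSemiringAction.toAlgEquiv R (Matrix n n R) (ConjAct.toConjAct S)).toAlgHom.comp
    (diagonalAlgHom R)

theorem conjDiagonal_apply (S : (Matrix n n R)ˣ) (d : n → R) :
    conjDiagonal S d = S * diagonal d * S⁻¹.val :=
  rfl

theorem conjDiagonal_injective (S : (Matrix n n R)ˣ) : Injective (conjDiagonal S) :=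
  (MulSemiringAction.toAlgEquiv R (Matrix n n R) (ConjAct.toConjAct S)).injective.comp
    diagonal_injective

theorem conjDiagonal_single (S : (Matrix n n R)ˣ) (i : n) :
    conjDiagonal S (Pi.single i 1) =
      vecMulVec (S.val.col i) (S⁻¹.val.row i) := by
  rw [conjDiagonal_apply, diagonal_single, single_eq_single_vecMulVec_single, mul_vecMulVec,
    vecMulVec_mul, mulVec_single_one, single_one_vecMul]

theorem spectrum_conjDiagonal (S : (Matrix n n K)ˣ) (d : n → K) :
    spectrum K (conjDiagonal S d) = Set.range d := by
  rw [conjDiagonal_apply, spectrum.units_conjugate, spectrum_diagonal]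

theorem eq_conjDiagonal_iff {S : (Matrix n n R)ˣ} {d : n → R} {A : Matrix n n R} :
    A = conjDiagonal S d ↔ A * S = S * diagonal d := by
  rw [conjDiagonal_apply, Units.eq_mul_inv_iff_mul_eq]

theorem exists_eq_conjDiagonal_of_isRoot {A : Matrix n n K} {d : n → K} (hd : Injective d)
    (hA : ∀ i, A.charpoly.IsRoot (d i)) : ∃ S, A = conjDiagonal S d := by
  have heig (i : n) : ∃ v : n → K, Module.End.HasEigenvector (toLin' A) (d i) v := by
    apply Module.End.HasEigenvalue.exists_hasEigenvector
    rw [Module.End.hasEigenvalue_iff_mem_spectrum, spectrum_toLin',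
      mem_spectrum_iff_isRoot_charpoly]
    exact hA i
  choose v hv using heig
  have hunit : IsUnit (of v)ᵀ := linearIndependent_cols_iff_isUnit.1 <|
    Module.End.eigenvectors_linearIndependent' (toLin' A) d hd v hv
  refine ⟨hunit.unit, eq_conjDiagonal_iff.2 ?_⟩
  ext i j
  rw [mul_diagonal, mul_comm]
  exact congrFun (hv j).apply_eq_smul i

theorem exists_eq_conjDiagonal_of_separable [IsAlgClosed K] {A : Matrix n n K}
    (hA : A.charpoly.Separable) : ∃ S d, A = conjDiagonal S d := by
  classical
  have hcard : A.charpoly.roots.toFinset.card = Fintype.card n := by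
    rw [Multiset.toFinset_card_of_nodup (nodup_roots hA),
      ← (IsAlgClosed.splits A.charpoly).natDegree_eq_card_roots, charpoly_natDegree_eq_dim]
  let e : n ≃ A.charpoly.roots.toFinset := Fintype.equivOfCardEq (by simp [hcard])
  obtain ⟨S, hS⟩ := exists_eq_conjDiagonal_of_isRoot (A := A) (d := fun i ↦ e i)
    (Subtype.val_injective.comp e.injective)
    fun i ↦ isRoot_of_mem_roots (Multiset.mem_toFinset.1 (e i).2)
  exact ⟨S, _, hS⟩

theorem exists_injective_of_infinite (α β : Type*) [Countable α] [Infinite β] :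
    ∃ f : α → β, Injective f :=
  have ⟨_, hf⟩ := exists_injective_nat α
  ⟨_, (Infinite.natEmbedding β).injective.comp hf⟩

theorem continuous_conjDiagonal (S : (Matrix n n ℂ)ˣ) : Continuous (conjDiagonal S) :=
  (conjDiagonal S).toLinearMap.continuous_of_finiteDimensional

theorem dense_conjDiagonal : Dense {A : Matrix n n ℂ | ∃ S d, A = conjDiagonal S d} := by
  obtain ⟨d, hd⟩ := exists_injective_of_infinite n ℂ
  refine (isLinewiseZariskiOpen_charpoly_separable.dense ⟨diagonal d, ?_⟩).mono
    fun A hA ↦ exists_eq_conjDiagonal_of_separable hA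
  rw [Set.mem_ofPred_eq, charpoly_diagonal, separable_prod_X_sub_C_iff]
  exact hd

theorem exists_eq_conjDiagonal_of_commute [IsDomain R] {S : (Matrix n n R)ˣ} {d : n → R}
    (hd : Injective d) {A : Matrix n n R} (hA : Commute A (conjDiagonal S d)) :
    ∃ e, A = conjDiagonal S e := by
  set B := S⁻¹.val * A * S with hB
  have hcomm : B * diagonal d = diagonal d * B := by
    have := congrArg (S⁻¹.val * · * S.val) hA.eq
    simpa [B, conjDiagonal_apply, mul_assoc, -coe_units_inv] using this
  have hdiag : B = diagonal B.diag := by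
    ext i j
    have hij := congrFun₂ hcomm i j
    rw [mul_diagonal, diagonal_mul] at hij
    rw [diagonal_apply]
    split_ifs with h
    · simp [h]
    · have : (d i - d j) * B i j = 0 := by linear_combination -hij
      exact (mul_eq_zero.1 this).resolve_left (sub_ne_zero.2 fun h' ↦ h (hd h'))
  refine ⟨B.diag, eq_conjDiagonal_iff.2 ?_⟩
  rw [← hdiag, hB, mul_assoc, Units.mul_inv_cancel_left]

end Diagonalization


/-! ### Preservation of the spectrum -/

section SpectrumShrinking

variable {n : Type*} [Fintype n] [DecidableEq n]

theorem continuous_eval_charpoly {R : Type*} [CommRing R] [TopologicalSpace R]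
    [IsTopologicalRing R] (z : R) : Continuous fun A : Matrix n n R ↦ A.charpoly.eval z := by
  simp_rw [eval_charpoly]
  fun_prop

theorem exists_eval_charpoly_eq_prod {K : Type*} [Field K] [IsAlgClosed K]
    {A : Matrix n n K} {d : n → K} (hA : spectrum K A ⊆ Set.range d) :
    ∃ M : Multiset n, M.card = Fintype.card n ∧
      ∀ z, A.charpoly.eval z = (M.map fun i ↦ z - d i).prod := by
  have hsplits := IsAlgClosed.splits A.charpoly
  have : CanLift K n d (· ∈ Set.range d) := ⟨fun _ h ↦ h⟩
  obtain ⟨M, hM⟩ : ∃ M : Multiset n, M.map d = A.charpoly.roots := CanLift.prf _ fun z hz ↦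
    hA (mem_spectrum_iff_isRoot_charpoly.2 (isRoot_of_mem_roots hz))
  refine ⟨M, ?_, fun z ↦ ?_⟩
  · rw [← Multiset.card_map d, hM, ← hsplits.natDegree_eq_card_roots, charpoly_natDegree_eq_dim]
  · rw [hsplits.eval_eq_prod_roots_of_monic (charpoly_monic A), ← hM, Multiset.map_map]
    rfl

theorem multiset_eq_of_prod_sub_eq {ι K : Type*} [Field K] [Infinite K] {d : ι → K}
    (hd : Injective d) {M N : Multiset ι}
    (h : ∀ z, (M.map fun i ↦ z - d i).prod = (N.map fun i ↦ z - d i).prod) : M = N := by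
  refine Multiset.map_injective hd ?_
  rw [← roots_multiset_prod_X_sub_C (M.map d), ← roots_multiset_prod_X_sub_C (N.map d)]
  congr 1
  refine Polynomial.funext fun z ↦ ?_
  simpa [eval_multiset_prod] using h z

theorem isPreconnected_units_prod_injective :
    IsPreconnected ({S : Matrix n n ℂ | IsUnit S} ×ˢ {d : n → ℂ | Injective d}) :=
  (isLinewiseZariskiOpen_isUnit.prod isLinewiseZariskiOpen_injective).isPreconnected

theorem continuousOn_conj_diagonal {K : Type*} [NormedField K] :
    ContinuousOn (fun p : Matrix n n K × (n → K) ↦ p.1 * diagonal p.2 * p.1⁻¹)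
      {p | IsUnit p.1} := by
  intro p hp
  have hdet : p.1.det ≠ 0 := ((isUnit_iff_isUnit_det _).1 hp).ne_zero
  have hinv : ContinuousAt (fun p : Matrix n n K × (n → K) ↦ p.1⁻¹) p :=
    (continuousAt_matrix_inv p.1 (NormedRing.inverse_continuousAt (Units.mk0 _ hdet))).comp
      continuousAt_fst
  have hmul : Continuous fun p : Matrix n n K × (n → K) ↦ p.1 * diagonal p.2 := by fun_prop
  exact (hmul.continuousAt.mul hinv).continuousWithinAt

variable {φ : Matrix n n ℂ → Matrix n n ℂ}

theorem exists_eval_charpoly_map_conjDiagonal_eq_prod (hφ : Continuous φ)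
    (hspec : ∀ X, spectrum ℂ (φ X) ⊆ spectrum ℂ X) :
    ∃ M : Multiset n, M.card = Fintype.card n ∧
      ∀ (S : (Matrix n n ℂ)ˣ) (d : n → ℂ), Injective d → ∀ z,
        (φ (conjDiagonal S d)).charpoly.eval z = (M.map fun i ↦ z - d i).prod := by
  have hexists (S : (Matrix n n ℂ)ˣ) (d : n → ℂ) :=
    exists_eval_charpoly_eq_prod (spectrum_conjDiagonal S d ▸ hspec (conjDiagonal S d))
  obtain ⟨d₀, hd₀⟩ := exists_injective_of_infinite n ℂ
  obtain ⟨M, hcard, hM⟩ := hexists 1 d₀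
  let f (p : Matrix n n ℂ × (n → ℂ)) (z : ℂ) : ℂ :=
    (φ (p.1 * diagonal p.2 * p.1⁻¹)).charpoly.eval z
  let g (N : Sym n (Fintype.card n)) (p : Matrix n n ℂ × (n → ℂ)) (z : ℂ) : ℂ :=
    ((N : Multiset n).map fun i ↦ z - p.2 i).prod
  have hf (S : (Matrix n n ℂ)ˣ) (d : n → ℂ) :
      f (S, d) = fun z ↦ (φ (conjDiagonal S d)).charpoly.eval z := by
    simp only [f, conjDiagonal_apply, coe_units_inv]
  have hfg : Set.EqOn f (g ⟨M, hcard⟩) _ :=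
    eq_of_mem_range_of_isPreconnected isPreconnected_units_prod_injective (x₀ := (1, d₀))
      (continuousOn_pi.2 fun z ↦ ((continuous_eval_charpoly z).comp hφ).comp_continuousOn
        (continuousOn_conj_diagonal.mono fun p hp ↦ hp.1))
      (fun N ↦ continuousOn_pi.2 fun z ↦ continuousOn_multiset_prod _ fun i _ ↦ by fun_prop)
      (by
        rintro ⟨_, d⟩ ⟨⟨S, rfl⟩, -⟩
        obtain ⟨N, hN, h⟩ := hexists S d
        exact ⟨⟨N, hN⟩, (hf S d).trans (funext h)⟩)
      (fun p hp N N' h ↦ Sym.coe_injective (multiset_eq_of_prod_sub_eq hp.2 (congrFun h)))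
      ⟨isUnit_one, hd₀⟩ ((hf 1 d₀).trans (funext hM))
  refine ⟨M, hcard, fun S d hd z ↦ ?_⟩
  exact (congrFun (hf S d) z).symm.trans (congrFun (hfg (Set.mk_mem_prod S.isUnit hd)) z)

theorem isRoot_charpoly_map_conjDiagonal (hφ : Continuous φ)
    (hspec : ∀ X, spectrum ℂ (φ X) ⊆ spectrum ℂ X) (S : (Matrix n n ℂ)ˣ) {d : n → ℂ}
    (hd : Injective d) (i : n) : (φ (conjDiagonal S d)).charpoly.IsRoot (d i) := by
  obtain ⟨M, hcard, hM⟩ := exists_eval_charpoly_map_conjDiagonal_eq_prod hφ hspec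
  have hperm (σ : Equiv.Perm n) : M.map σ = M := by
    obtain ⟨T, hT⟩ : ∃ T, conjDiagonal S (d ∘ σ) = conjDiagonal T d := by
      refine exists_eq_conjDiagonal_of_isRoot hd fun j ↦ ?_
      rw [← mem_spectrum_iff_isRoot_charpoly, spectrum_conjDiagonal, σ.surjective.range_comp]
      exact ⟨j, rfl⟩
    refine multiset_eq_of_prod_sub_eq hd fun z ↦ ?_
    rw [← hM T d hd, ← hT, hM S _ (hd.comp σ.injective), Multiset.map_map]
    rfl
  obtain ⟨j, hj⟩ : ∃ j, j ∈ M := by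
    rw [← Multiset.card_pos_iff_exists_mem, hcard]
    exact Fintype.card_pos_iff.2 ⟨i⟩
  have hi : i ∈ M := by
    rw [← hperm (Equiv.swap j i)]
    exact Multiset.mem_map.2 ⟨j, hj, Equiv.swap_apply_left j i⟩
  rw [IsRoot, hM S d hd]
  exact Multiset.prod_eq_zero (Multiset.mem_map.2 ⟨i, hi, sub_self _⟩)

end SpectrumShrinking


/-! ### Functional calculus -/

/-- A continuous, commutativity-preserving and spectrum-shrinking map between complex matrices. -/
structure IsShrinkingPreserver {n : Type*} [Fintype n] [DecidableEq n]
    (φ : Matrix n n ℂ → Matrix n n ℂ) : Prop where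
  continuous : Continuous φ
  commute_map : ∀ {X Y}, Commute X Y → Commute (φ X) (φ Y)
  spectrum_map_subset : ∀ X, spectrum ℂ (φ X) ⊆ spectrum ℂ X

namespace IsShrinkingPreserver

variable {n : Type*} [Fintype n] [DecidableEq n] {φ : Matrix n n ℂ → Matrix n n ℂ}

theorem comp_transpose (hφ : IsShrinkingPreserver φ) : IsShrinkingPreserver fun X ↦ φ Xᵀ where
  continuous := hφ.continuous.comp continuous_id.matrix_transpose
  commute_map h := hφ.commute_map <| by
    rw [Commute, SemiconjBy, ← transpose_mul, ← transpose_mul, h.eq]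
  spectrum_map_subset X z hz := by
    have := hφ.spectrum_map_subset _ hz
    rwa [mem_spectrum_iff_isRoot_charpoly, charpoly_transpose,
      ← mem_spectrum_iff_isRoot_charpoly] at this

theorem exists_perm_map_conjDiagonal (hφ : IsShrinkingPreserver φ) {S T : (Matrix n n ℂ)ˣ}
    {d₀ d : n → ℂ} (hd₀ : Injective d₀) (hd : Injective d)
    (hST : φ (conjDiagonal S d₀) = conjDiagonal T d₀) :
    ∃ σ : Equiv.Perm n, φ (conjDiagonal S d) = conjDiagonal T (d ∘ σ) := by
  have hcomm : Commute (φ (conjDiagonal S d)) (conjDiagonal T d₀) :=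
    hST ▸ hφ.commute_map ((Commute.all d d₀).map (conjDiagonal S))
  obtain ⟨e, he⟩ := exists_eq_conjDiagonal_of_commute hd₀ hcomm
  have hrange (i : n) : ∃ j, e j = d i := by
    rw [← Set.mem_range, ← spectrum_conjDiagonal T, ← he, mem_spectrum_iff_isRoot_charpoly]
    exact isRoot_charpoly_map_conjDiagonal hφ.continuous hφ.spectrum_map_subset S hd i
  choose σ hσ using hrange
  have hσ_inj : Injective σ := fun i j hij ↦ hd (by rw [← hσ, hij, hσ])
  let τ := Equiv.ofBijective σ (Finite.injective_iff_bijective.1 hσ_inj)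
  refine ⟨τ.symm, he.trans (congrArg _ (funext fun j ↦ ?_))⟩
  rw [Function.comp_apply, ← hσ]
  exact congrArg e (τ.apply_symm_apply j).symm

theorem exists_map_conjDiagonal (hφ : IsShrinkingPreserver φ) (S : (Matrix n n ℂ)ˣ) :
    ∃ T, ∀ d, φ (conjDiagonal S d) = conjDiagonal T d := by
  obtain ⟨d₀, hd₀⟩ := exists_injective_of_infinite n ℂ
  obtain ⟨T, hT⟩ := exists_eq_conjDiagonal_of_isRoot hd₀
    (isRoot_charpoly_map_conjDiagonal hφ.continuous hφ.spectrum_map_subset S hd₀)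
  have hφS : Continuous fun d ↦ φ (conjDiagonal S d) :=
    hφ.continuous.comp (continuous_conjDiagonal S)
  have hinj : Set.EqOn (fun d ↦ φ (conjDiagonal S d)) (fun d ↦ conjDiagonal T d)
      {d | Injective d} := by
    refine eq_of_mem_range_of_isPreconnected isLinewiseZariskiOpen_injective.isPreconnected
      (g := fun (σ : Equiv.Perm n) d ↦ conjDiagonal T (d ∘ σ)) (i := 1) (x₀ := d₀)
      hφS.continuousOn (fun σ ↦ ?_) (fun d hd ↦ hφ.exists_perm_map_conjDiagonal hd₀ hd hT)
      (fun d hd σ τ h ↦ ?_) hd₀ hT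
    · exact ((continuous_conjDiagonal T).comp (by fun_prop)).continuousOn
    · exact Equiv.ext fun i ↦ hd (congrFun (conjDiagonal_injective T h) i)
  exact ⟨T, congrFun (hφS.ext_on (isLinewiseZariskiOpen_injective.dense ⟨d₀, hd₀⟩)
    (continuous_conjDiagonal T) hinj)⟩

theorem map_aeval (hφ : IsShrinkingPreserver φ) (p : ℂ[X]) (A : Matrix n n ℂ) :
    φ (aeval A p) = aeval (φ A) p := by
  have hp : Continuous fun A : Matrix n n ℂ ↦ aeval A p := p.continuous_aeval
  refine congrFun ((hφ.continuous.comp hp).ext_on dense_conjDiagonal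
    (hp.comp hφ.continuous) ?_) A
  rintro _ ⟨S, d, rfl⟩
  obtain ⟨T, hT⟩ := hφ.exists_map_conjDiagonal S
  simp only [Function.comp_apply, aeval_algHom_apply, hT]

theorem map_smul (hφ : IsShrinkingPreserver φ) (c : ℂ) (A : Matrix n n ℂ) :
    φ (c • A) = c • φ A := by
  have := hφ.map_aeval (c • X) A
  rwa [_root_.map_smul, _root_.map_smul, aeval_X, aeval_X] at this

theorem map_zero (hφ : IsShrinkingPreserver φ) : φ 0 = 0 := by
  simpa using hφ.map_smul 0 0

theorem map_mul_self (hφ : IsShrinkingPreserver φ) (A : Matrix n n ℂ) :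
    φ (A * A) = φ A * φ A := by
  have := hφ.map_aeval (X * X) A
  rwa [_root_.map_mul, _root_.map_mul, aeval_X, aeval_X] at this

-- `P`, `Q` and `P + Q` are all polynomials in `P + 2 • Q`.
theorem map_add_of_orthogonal (hφ : IsShrinkingPreserver φ) {P Q : Matrix n n ℂ}
    (hP : IsIdempotentElem P) (hQ : IsIdempotentElem Q) (hPQ : P * Q = 0) (hQP : Q * P = 0) :
    φ (P + Q) = φ P + φ Q := by
  set A := P + (2 : ℂ) • Q with hA
  have hsq : A * A = P + (4 : ℂ) • Q := by
    simp only [hA, add_mul, mul_add, smul_mul_assoc, mul_smul_comm, hP.eq, hQ.eq, hPQ, hQP]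
    module
  have hpoly (a b : ℂ) : φ (a • A + b • (A * A)) = a • φ A + b • (φ A * φ A) := by
    have := hφ.map_aeval (a • X + b • (X * X)) A
    simpa only [_root_.map_add, _root_.map_smul, _root_.map_mul, aeval_X] using this
  have hP' : P = (2 : ℂ) • A + (-1 : ℂ) • (A * A) := by rw [hsq, hA]; module
  have hQ' : Q = (-1 / 2 : ℂ) • A + (1 / 2 : ℂ) • (A * A) := by rw [hsq, hA]; module
  have hPQ' : P + Q = (3 / 2 : ℂ) • A + (-1 / 2 : ℂ) • (A * A) := by rw [hsq, hA]; module
  calc φ (P + Q) = (3 / 2 : ℂ) • φ A + (-1 / 2 : ℂ) • (φ A * φ A) := by rw [hPQ', hpoly]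
    _ = ((2 : ℂ) • φ A + (-1 : ℂ) • (φ A * φ A)) +
        ((-1 / 2 : ℂ) • φ A + (1 / 2 : ℂ) • (φ A * φ A)) := by module
    _ = φ P + φ Q := by rw [← hpoly, ← hpoly, ← hP', ← hQ']

end IsShrinkingPreserver


/-! ### Linearity -/

section Affine

variable {K V W : Type*} [Field K] [AddCommGroup V] [Module K V]

theorem exists_dual_eq_zero_eq_one_of_notMem_span {p r : V} (h : p ∉ K ∙ r) :
    ∃ f : Module.Dual K V, f r = 0 ∧ f p = 1 := by
  obtain ⟨f, hf, hle⟩ := (K ∙ r).exists_le_ker_of_notMem h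
  have hr : f r = 0 := hle (Submodule.mem_span_singleton_self r)
  exact ⟨(f p)⁻¹ • f, by simp [hr], by simp [hf]⟩

theorem exists_dual_eq_zero_notMem_span [FiniteDimensional K V] (hV : 3 ≤ Module.finrank K V)
    (f : Module.Dual K V) (p : V) : ∃ q, f q = 0 ∧ q ∉ K ∙ p := by
  have hker : 1 < Module.finrank K f.ker := by
    have := f.finrank_range_add_finrank_ker
    have := (LinearMap.range f).finrank_le
    rw [Module.finrank_self] at this
    omega
  by_contra! h
  have hle : f.ker ≤ K ∙ p := h
  have := (Submodule.finrank_mono hle).trans (finrank_span_le_card {p})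
  rw [Set.toFinset_singleton, Finset.card_singleton] at this
  omega

variable [AddCommGroup W] [Module K W] {L : V → W}

theorem map_add_of_map_add_of_eq_one {f : Module.Dual K V} (hf : f ≠ 0)
    (hsmul : ∀ (c : K) x, L (c • x) = c • L x)
    (hadd : ∀ x p, f x = 1 → f p = 0 → L (x + p) = L x + L p) (x y : V) :
    L (x + y) = L x + L y := by
  obtain ⟨x₀, hx₀⟩ : ∃ x₀, f x₀ = 1 := LinearMap.surjective hf 1
  have hker (p q : V) (hp : f p = 0) (hq : f q = 0) : L (p + q) = L p + L q := by
    have h₁ := hadd (x₀ + p) q (by simp [hx₀, hp]) hq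
    rwa [add_assoc, hadd x₀ _ hx₀ (by simp [hp, hq]), hadd x₀ p hx₀ hp, add_assoc,
      add_right_inj] at h₁
  have hline (c : K) (p : V) (hp : f p = 0) : L (c • x₀ + p) = c • L x₀ + L p := by
    obtain rfl | hc := eq_or_ne c 0
    · simp
    · have := hadd x₀ (c⁻¹ • p) hx₀ (by simp [hp])
      rw [← smul_inv_smul₀ hc p, ← smul_add, hsmul, this, smul_add, ← hsmul c (c⁻¹ • p)]
  have hproj (z : V) : f (z - f z • x₀) = 0 := by simp [hx₀]
  have hdecomp (z : V) : L z = f z • L x₀ + L (z - f z • x₀) := by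
    rw [← hline _ _ (hproj z), add_sub_cancel]
  calc L (x + y) = L ((f x + f y) • x₀ + ((x - f x • x₀) + (y - f y • x₀))) := by
        congr 1; module
    _ = (f x • L x₀ + L (x - f x • x₀)) + (f y • L x₀ + L (y - f y • x₀)) := by
        rw [hline _ _ (by rw [map_add, hproj, hproj, add_zero]), hker _ _ (hproj x) (hproj y)]
        module
    _ = L x + L y := by rw [← hdecomp, ← hdecomp]

end Affine

theorem map_add_of_forall_sub_eq_sub {𝕜 V W : Type*} [RCLike 𝕜]
    [AddCommGroup V] [Module 𝕜 V] [TopologicalSpace V] [ContinuousAdd V] [ContinuousSMul 𝕜 V]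
    [AddCommGroup W] [Module 𝕜 W] [TopologicalSpace W] [T2Space W] [IsTopologicalAddGroup W]
    [ContinuousSMul 𝕜 W] {L : V → W} (hL : Continuous L) (hsmul : ∀ (c : 𝕜) x, L (c • x) = c • L x)
    {x p : V} (hstep : ∀ k : ℕ, L (x + k • p + p) - L (x + k • p) = L (x + p) - L x) :
    L (x + p) = L x + L p := by
  have hprog (k : ℕ) : L (x + k • p) = L x + k • (L (x + p) - L x) := by
    induction k with
    | zero => simp
    | succ k ih => rw [succ_nsmul, ← add_assoc, ← sub_add_cancel (L (x + k • p + p)), hstep, ih,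
        succ_nsmul, add_comm, add_assoc]
  let h (c : 𝕜) : W := L (c • x + p) - c • L x
  have hh (k : ℕ) : h (1 / ((k : 𝕜) + 1)) = L (x + p) - L x := by
    have hk : (k : 𝕜) + 1 ≠ 0 := Nat.cast_add_one_ne_zero k
    have hsplit : (1 / ((k : 𝕜) + 1)) • x + p = (1 / ((k : 𝕜) + 1)) • (x + (k + 1) • p) := by
      rw [← Nat.cast_smul_eq_nsmul 𝕜]
      match_scalars <;> field_simp
    simp only [h]
    rw [hsplit, hsmul, hprog, ← Nat.cast_smul_eq_nsmul 𝕜]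
    match_scalars <;> field_simp
    ring
  have hcont : Continuous h := by unfold h; fun_prop
  have hlim := (hcont.tendsto 0).comp (tendsto_one_div_add_atTop_nhds_zero_nat (𝕜 := 𝕜))
  have h₀ : h 0 = L (x + p) - L x :=
    tendsto_nhds_unique hlim (tendsto_const_nhds.congr fun k ↦ (hh k).symm)
  have hLp : L p = L (x + p) - L x := by simpa [h] using h₀
  rw [hLp, add_sub_cancel]


theorem isIdempotentElem_vecMulVec {R n : Type*} [CommSemiring R] [Fintype n] {x f : n → R}
    (h : f ⬝ᵥ x = 1) : IsIdempotentElem (vecMulVec x f) := by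
  rw [IsIdempotentElem, vecMulVec_mul_vecMulVec, h, one_smul]

theorem vecMulVec_mul_vecMulVec_eq_zero {R n : Type*} [CommSemiring R] [Fintype n]
    {x f y g : n → R} (h : f ⬝ᵥ y = 0) : vecMulVec x f * vecMulVec y g = 0 := by
  rw [vecMulVec_mul_vecMulVec, h, zero_smul, vecMulVec_zero]

theorem exists_linearMap_vecMulVec_eq {R m n W : Type*} [CommSemiring R] [Finite m] [Finite n]
    [AddCommMonoid W] [Module R W]
    (B : (m → R) →ₗ[R] (n → R) →ₗ[R] W) :
    ∃ Φ : Matrix m n R →ₗ[R] W, ∀ x y, Φ (vecMulVec x y) = B x y := by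
  classical
  cases nonempty_fintype m
  cases nonempty_fintype n
  let Φ : Matrix m n R →ₗ[R] W := liftLinear R fun i j ↦
    LinearMap.toSpanSingleton R W (B (Pi.single i 1) (Pi.single j 1))
  have h : (vecMulVecBilin R R).compr₂ Φ = B := by
    ext i j
    simp [Φ, ← single_eq_single_vecMulVec_single]
  exact ⟨Φ, fun x y ↦ congr($h x y)⟩

namespace IsShrinkingPreserver

variable {n : Type*} [Fintype n] [DecidableEq n] {φ : Matrix n n ℂ → Matrix n n ℂ}

-- Both sides equal `φ (vecMulVec x f + vecMulVec p g)`: its argument is a sum of two orthogonal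
-- idempotents in two ways.
theorem map_vecMulVec_add_map_vecMulVec (hφ : IsShrinkingPreserver φ) {x p f g : n → ℂ}
    (hfx : f ⬝ᵥ x = 1) (hfp : f ⬝ᵥ p = 0) (hgx : g ⬝ᵥ x = 0) (hgp : g ⬝ᵥ p = 1) :
    φ (vecMulVec (x + p) f) + φ (vecMulVec p (g - f)) =
      φ (vecMulVec x f) + φ (vecMulVec p g) := by
  rw [← hφ.map_add_of_orthogonal, ← hφ.map_add_of_orthogonal]
  · rw [add_vecMulVec, vecMulVec_sub, add_add_sub_cancel]
  · exact isIdempotentElem_vecMulVec hfx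
  · exact isIdempotentElem_vecMulVec hgp
  · exact vecMulVec_mul_vecMulVec_eq_zero hfp
  · exact vecMulVec_mul_vecMulVec_eq_zero hgx
  · exact isIdempotentElem_vecMulVec (by simp [hfx, hfp])
  · exact isIdempotentElem_vecMulVec (by simp [hgp, hfp])
  · exact vecMulVec_mul_vecMulVec_eq_zero hfp
  · exact vecMulVec_mul_vecMulVec_eq_zero (by simp [hgx, hgp, hfx, hfp])

theorem map_vecMulVec_sub_eq_of_notMem_span (hφ : IsShrinkingPreserver φ) {x p r f : n → ℂ}
    (hfx : f ⬝ᵥ x = 1) (hfp : f ⬝ᵥ p = 0) (hfr : f ⬝ᵥ r = 0) (hpr : p ∉ ℂ ∙ r) :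
    φ (vecMulVec (x + r + p) f) - φ (vecMulVec (x + r) f) =
      φ (vecMulVec (x + p) f) - φ (vecMulVec x f) := by
  obtain ⟨g, hgr, hgp⟩ : ∃ g : n → ℂ, g ⬝ᵥ r = 0 ∧ g ⬝ᵥ p = 1 := by
    obtain ⟨g, hg⟩ := exists_dual_eq_zero_eq_one_of_notMem_span hpr
    exact ⟨(dotProductEquiv ℂ n).symm g, by simpa [← dotProductEquiv_apply_apply] using hg⟩
  -- Subtracting a multiple of `f` makes `g` vanish at `x` and at `x + r`.
  have hexch (y : n → ℂ) (hfy : f ⬝ᵥ y = 1) (hgy : g ⬝ᵥ y = g ⬝ᵥ x) :=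
    hφ.map_vecMulVec_add_map_vecMulVec (g := g - (g ⬝ᵥ x) • f) hfy hfp (by simp [hfy, hgy])
      (by simp [hgp, hfp])
  have h₁ := hexch (x + r) (by simp [hfx, hfr]) (by simp [hgr])
  have h₂ := hexch x hfx rfl
  rw [← eq_sub_iff_add_eq] at h₁ h₂
  rw [h₁, h₂]
  abel

theorem map_vecMulVec_add_add_sub_eq (hφ : IsShrinkingPreserver φ) (hn : 3 ≤ Fintype.card n)
    {x p f : n → ℂ} (hfx : f ⬝ᵥ x = 1) (hfp : f ⬝ᵥ p = 0) :
    φ (vecMulVec (x + p + p) f) - φ (vecMulVec (x + p) f) =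
      φ (vecMulVec (x + p) f) - φ (vecMulVec x f) := by
  obtain rfl | hp := eq_or_ne p 0
  · simp
  obtain ⟨q, hfq, hqp⟩ := exists_dual_eq_zero_notMem_span
    (by rwa [Module.finrank_fintype_fun_eq_card]) (dotProductEquiv ℂ n f) p
  rw [dotProductEquiv_apply_apply] at hfq
  have hind := LinearIndependent.pair_iff.1 <| (LinearIndependent.pair_iff' hp).2 fun c hc ↦
    hqp (Submodule.mem_span_singleton.2 ⟨c, hc⟩)
  have hpq : p ∉ ℂ ∙ q := fun h ↦ by
    obtain ⟨c, hc⟩ := Submodule.mem_span_singleton.1 h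
    exact one_ne_zero (hind 1 (-c) (by rw [← hc]; module)).1
  have hppq : p ∉ ℂ ∙ (p - q) := fun h ↦ by
    obtain ⟨c, hc⟩ := Submodule.mem_span_singleton.1 h
    obtain ⟨h₁, h₂⟩ := hind (1 - c) c (by
      linear_combination (norm := module) -hc)
    simp [h₂] at h₁
  have h₁ := hφ.map_vecMulVec_sub_eq_of_notMem_span hfx hfp hfq hpq
  have h₂ := hφ.map_vecMulVec_sub_eq_of_notMem_span (x := x + q) (r := p - q) (by simp [hfx, hfq])
    hfp (by simp [hfp, hfq]) hppq
  rw [add_assoc x, add_sub_cancel] at h₂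
  exact h₂.trans h₁

theorem map_vecMulVec_add_left (hφ : IsShrinkingPreserver φ) (hn : 3 ≤ Fintype.card n)
    (f x y : n → ℂ) :
    φ (vecMulVec (x + y) f) = φ (vecMulVec x f) + φ (vecMulVec y f) := by
  obtain rfl | hf := eq_or_ne f 0
  · simp [hφ.map_zero]
  have hsmul (c : ℂ) (x : n → ℂ) : φ (vecMulVec (c • x) f) = c • φ (vecMulVec x f) := by
    rw [smul_vecMulVec, hφ.map_smul]
  refine map_add_of_map_add_of_eq_one (L := fun x ↦ φ (vecMulVec x f))
    ((dotProductEquiv ℂ n).map_ne_zero_iff.2 hf) hsmul (fun x p hfx hfp ↦ ?_) x y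
  rw [dotProductEquiv_apply_apply] at hfx hfp
  refine map_add_of_forall_sub_eq_sub (L := fun x ↦ φ (vecMulVec x f))
    (hφ.continuous.comp (by fun_prop)) hsmul fun k ↦ ?_
  induction k with
  | zero => simp
  | succ k ih =>
    rw [succ_nsmul, ← add_assoc, hφ.map_vecMulVec_add_add_sub_eq hn _ hfp, ih]
    simp [hfx, hfp, -nsmul_eq_mul]

theorem map_vecMulVec_add_right (hφ : IsShrinkingPreserver φ) (hn : 3 ≤ Fintype.card n)
    (x f g : n → ℂ) :
    φ (vecMulVec x (f + g)) = φ (vecMulVec x f) + φ (vecMulVec x g) := by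
  simpa only [transpose_vecMulVec] using hφ.comp_transpose.map_vecMulVec_add_left hn x f g

theorem exists_linearMap_eq (hφ : IsShrinkingPreserver φ) (hn : 3 ≤ Fintype.card n) :
    ∃ Φ : Matrix n n ℂ →ₗ[ℂ] Matrix n n ℂ, φ = Φ := by
  obtain ⟨Φ, hΦ⟩ := exists_linearMap_vecMulVec_eq <|
    LinearMap.mk₂ ℂ (fun x f ↦ φ (vecMulVec x f)) (fun x y f ↦ hφ.map_vecMulVec_add_left hn f x y)
      (fun c x f ↦ by rw [smul_vecMulVec, hφ.map_smul]) (hφ.map_vecMulVec_add_right hn)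
      (fun c x f ↦ by rw [vecMulVec_smul, hφ.map_smul])
  refine ⟨Φ, hφ.continuous.ext_on dense_conjDiagonal Φ.continuous_of_finiteDimensional ?_⟩
  rintro _ ⟨S, d, rfl⟩
  obtain ⟨T, hT⟩ := hφ.exists_map_conjDiagonal S
  have heq : (conjDiagonal T).toLinearMap = Φ ∘ₗ (conjDiagonal S).toLinearMap := by
    refine LinearMap.pi_ext' fun i ↦ LinearMap.ext_ring ?_
    change conjDiagonal T (Pi.single i 1) = Φ (conjDiagonal S (Pi.single i 1))
    rw [← hT, conjDiagonal_single, hΦ, LinearMap.mk₂_apply]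
  exact (hT d).trans congr($heq d)

end IsShrinkingPreserver


/-! ### Jordan homomorphisms -/

/-- A Jordan homomorphism between matrix algebras, i.e. a linear map which preserves squares, that
fixes every diagonal matrix. -/
structure IsDiagonalFixingJordanHom {R n : Type*} [CommRing R] [Fintype n] [DecidableEq n]
    (Φ : Matrix n n R →ₗ[R] Matrix n n R) : Prop where
  map_mul_self : ∀ X, Φ (X * X) = Φ X * Φ X
  map_diagonal : ∀ d, Φ (diagonal d) = diagonal d

namespace IsDiagonalFixingJordanHom

variable {R n : Type*} [CommRing R] [Fintype n] [DecidableEq n]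
  {Φ : Matrix n n R →ₗ[R] Matrix n n R} {i j k l : n}

theorem transpose (hΦ : IsDiagonalFixingJordanHom Φ) :
    IsDiagonalFixingJordanHom ((transposeLinearEquiv n n R R).toLinearMap ∘ₗ Φ) where
  map_mul_self X := by simp [hΦ.map_mul_self]
  map_diagonal d := by simp [hΦ.map_diagonal]

theorem map_mul_add_mul (hΦ : IsDiagonalFixingJordanHom Φ) (X Y : Matrix n n R) :
    Φ (X * Y + Y * X) = Φ X * Φ Y + Φ Y * Φ X := by
  have h := hΦ.map_mul_self (X + Y)
  simp only [add_mul, mul_add, map_add, hΦ.map_mul_self] at h ⊢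
  linear_combination (norm := abel) h

theorem map_single_self (hΦ : IsDiagonalFixingJordanHom Φ) (i : n) :
    Φ (single i i 1) = single i i 1 := by
  rw [← diagonal_single, hΦ.map_diagonal]

-- Compare entries in `Φ X = e * Φ X + Φ X * e`, where `X = single i j 1` and `e` is `single i i 1`
-- or `single j j 1`.
theorem map_single_apply_eq_zero (hΦ : IsDiagonalFixingJordanHom Φ) (hij : i ≠ j)
    (h₁ : ¬(k = i ∧ l = j)) (h₂ : ¬(k = j ∧ l = i)) : Φ (single i j 1) k l = 0 := by
  have hentry (m : n) (hm : single m m 1 * single i j (1 : R) + single i j 1 * single m m 1 =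
      single i j 1) : Φ (single i j 1) k l =
        ((if k = m then 1 else 0) + (if l = m then 1 else 0)) * Φ (single i j 1) k l := by
    have h := hΦ.map_mul_add_mul (single m m 1) (single i j 1)
    rw [hm, hΦ.map_single_self, ← diagonal_single] at h
    have hkl := congrFun₂ h k l
    rw [Matrix.add_apply, diagonal_mul, mul_diagonal, Pi.single_apply, Pi.single_apply] at hkl
    linear_combination hkl
  have hi := hentry i (by simp [hij.symm])
  have hj := hentry j (by simp [hij.symm])
  grind

theorem map_single_eq (hΦ : IsDiagonalFixingJordanHom Φ) (hij : i ≠ j) :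
    Φ (single i j 1) =
      single i j (Φ (single i j 1) i j) + single j i (Φ (single i j 1) j i) := by
  ext k l
  by_cases h₁ : k = i ∧ l = j
  · simp [h₁, hij]
  by_cases h₂ : k = j ∧ l = i
  · simp [h₂, hij]
  rw [hΦ.map_single_apply_eq_zero hij h₁ h₂, Matrix.add_apply,
    single_apply_of_ne _ _ _ _ _ (by grind), single_apply_of_ne _ _ _ _ _ (by grind), add_zero]

theorem map_single_apply_mul_eq_zero (hΦ : IsDiagonalFixingJordanHom Φ) (hij : i ≠ j) :
    Φ (single i j 1) i j * Φ (single i j 1) j i = 0 := by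
  have h := hΦ.map_mul_self (single i j 1)
  rw [single_mul_single_of_ne _ _ _ _ hij.symm, map_zero, hΦ.map_single_eq hij] at h
  simpa [add_mul, mul_add, hij, hij.symm] using (congrFun₂ h i i).symm

theorem map_single_apply_mul_add_eq_one (hΦ : IsDiagonalFixingJordanHom Φ) (hij : i ≠ j) :
    Φ (single i j 1) i j * Φ (single j i 1) j i +
      Φ (single i j 1) j i * Φ (single j i 1) i j = 1 := by
  have h := hΦ.map_mul_add_mul (single i j 1) (single j i 1)
  rw [single_mul_single_same, single_mul_single_same, map_add, mul_one, hΦ.map_single_self,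
    hΦ.map_single_self, hΦ.map_single_eq hij, hΦ.map_single_eq hij.symm] at h
  rw [mul_comm (Φ (single i j 1) j i)]
  simpa [add_mul, mul_add, hij, hij.symm] using (congrFun₂ h i i).symm

theorem map_single_apply_mul (hΦ : IsDiagonalFixingJordanHom Φ) (hij : i ≠ j) (hjk : j ≠ k)
    (hik : i ≠ k) :
    Φ (single i j 1) i j * Φ (single j k 1) j k = Φ (single i k 1) i k := by
  have h := hΦ.map_mul_add_mul (single i j 1) (single j k 1)
  rw [single_mul_single_same, single_mul_single_of_ne _ _ _ _ hik.symm, add_zero, mul_one,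
    hΦ.map_single_eq hij, hΦ.map_single_eq hjk] at h
  simpa [add_mul, mul_add, hij, hjk, hjk.symm, hik] using (congrFun₂ h i k).symm

theorem exists_eq_mul_mul_of_swap_eq_zero [Nonempty n] (hΦ : IsDiagonalFixingJordanHom Φ)
    (hswap : ∀ i j, i ≠ j → Φ (single i j 1) j i = 0) :
    ∃ T T' : Matrix n n R, T * T' = 1 ∧ ∀ X, Φ X = T * X * T' := by
  let a (i j : n) : R := Φ (single i j 1) i j
  have ha_self (i : n) : a i i = 1 := by simp [a, hΦ.map_single_self]
  have ha_mul (i j k : n) : a i j * a j k = a i k := by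
    obtain rfl | hij := eq_or_ne i j
    · rw [ha_self, one_mul]
    obtain rfl | hjk := eq_or_ne j k
    · rw [ha_self, mul_one]
    obtain rfl | hik := eq_or_ne i k
    · simpa [ha_self, hswap i j hij] using hΦ.map_single_apply_mul_add_eq_one hij
    · exact hΦ.map_single_apply_mul hij hjk hik
  have hΦ_single (i j : n) : Φ (single i j 1) = single i j (a i j) := by
    obtain rfl | hij := eq_or_ne i j
    · rw [ha_self, hΦ.map_single_self]
    · rw [hΦ.map_single_eq hij, hswap i j hij, single_zero, add_zero]
  obtain ⟨i₀⟩ := ‹Nonempty n›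
  refine ⟨diagonal (a · i₀), diagonal (a i₀), ?_, fun X ↦ ?_⟩
  · simp [diagonal_mul_diagonal, ha_mul, ha_self]
  · suffices Φ = LinearMap.mulLeftRight R (diagonal (a · i₀), diagonal (a i₀)) by
      rw [this, LinearMap.mulLeftRight_apply]
    refine ext_linearMap _ fun i j ↦ LinearMap.ext_ring ?_
    ext k l
    simp only [LinearMap.comp_apply, singleLinearMap_apply, hΦ_single, single_apply,
      LinearMap.mulLeftRight_apply, mul_diagonal, diagonal_mul, mul_ite, mul_one, mul_zero,
      ite_mul, zero_mul]
    grind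

variable [IsDomain R]

theorem map_single_apply_swap_eq_zero_symm (hΦ : IsDiagonalFixingJordanHom Φ) (hij : i ≠ j)
    (h : Φ (single i j 1) j i = 0) : Φ (single j i 1) i j = 0 := by
  have h₁ := hΦ.map_single_apply_mul_add_eq_one hij
  rw [h, zero_mul, add_zero] at h₁
  exact (mul_eq_zero.1 (hΦ.map_single_apply_mul_eq_zero hij.symm)).resolve_left
    (right_ne_zero_of_mul_eq_one h₁)

theorem map_single_apply_swap_eq_zero_of_eq_zero (hΦ : IsDiagonalFixingJordanHom Φ) {p q : n}
    (hpq : p ≠ q) (h : Φ (single p q 1) q p = 0) (hij : i ≠ j) : Φ (single i j 1) j i = 0 := by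
  have hrow {i j k : n} (hij : i ≠ j) (hik : i ≠ k) (h : Φ (single i j 1) j i = 0) :
      Φ (single i k 1) k i = 0 := by
    obtain rfl | hjk := eq_or_ne j k
    · exact h
    · simpa [h] using (hΦ.transpose.map_single_apply_mul hij hjk hik).symm
  obtain rfl | hpi := eq_or_ne p i
  · exact hrow hpq hij h
  · exact hrow hpi.symm hij (hΦ.map_single_apply_swap_eq_zero_symm hpi (hrow hpq hpi h))

theorem map_single_apply_eq_zero_or (hΦ : IsDiagonalFixingJordanHom Φ) :
    (∀ i j, i ≠ j → Φ (single i j 1) j i = 0) ∨ (∀ i j, i ≠ j → Φ (single i j 1) i j = 0) := by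
  by_cases h : ∃ p q, p ≠ q ∧ Φ (single p q 1) q p = 0
  · obtain ⟨p, q, hpq, h⟩ := h
    exact .inl fun i j hij ↦ hΦ.map_single_apply_swap_eq_zero_of_eq_zero hpq h hij
  · push Not at h
    exact .inr fun i j hij ↦
      (mul_eq_zero.1 (hΦ.map_single_apply_mul_eq_zero hij)).resolve_right (h i j hij)

theorem exists_eq_mul_mul_or_eq_mul_transpose_mul [Nonempty n]
    (hΦ : IsDiagonalFixingJordanHom Φ) :
    ∃ T T' : Matrix n n R, T * T' = 1 ∧ ((∀ X, Φ X = T * X * T') ∨ ∀ X, Φ X = T * Xᵀ * T') := by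
  obtain h | h := hΦ.map_single_apply_eq_zero_or
  · obtain ⟨T, T', hT, hΦT⟩ := hΦ.exists_eq_mul_mul_of_swap_eq_zero h
    exact ⟨T, T', hT, .inl hΦT⟩
  · obtain ⟨T, T', hT, hΦT⟩ := hΦ.transpose.exists_eq_mul_mul_of_swap_eq_zero h
    refine ⟨T'ᵀ, Tᵀ, by rw [← transpose_mul, hT, transpose_one], .inr fun X ↦ ?_⟩
    simpa [mul_assoc] using congrArg Matrix.transpose (hΦT X)

end IsDiagonalFixingJordanHom


namespace IsShrinkingPreserver

variable {n : Type*} [Fintype n] [DecidableEq n] {φ : Matrix n n ℂ → Matrix n n ℂ}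

theorem exists_eq_conj_isDiagonalFixingJordanHom (hφ : IsShrinkingPreserver φ)
    (hn : 3 ≤ Fintype.card n) :
    ∃ (S : (Matrix n n ℂ)ˣ) (Φ : Matrix n n ℂ →ₗ[ℂ] Matrix n n ℂ),
      IsDiagonalFixingJordanHom Φ ∧ ∀ X, φ X = S * Φ X * S⁻¹.val := by
  obtain ⟨Φ, rfl⟩ := hφ.exists_linearMap_eq hn
  obtain ⟨S, hS⟩ := hφ.exists_map_conjDiagonal 1
  have hΦ (d : n → ℂ) : Φ (diagonal d) = S * diagonal d * S⁻¹.val := by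
    simpa only [conjDiagonal_apply, inv_one, Units.val_one, one_mul, mul_one] using hS d
  refine ⟨S, LinearMap.mulLeftRight ℂ (S⁻¹.val, S.val) ∘ₗ Φ, ⟨fun X ↦ ?_, fun d ↦ ?_⟩, fun X ↦ ?_⟩
  all_goals rw [LinearMap.comp_apply, LinearMap.mulLeftRight_apply]
  · simp only [hφ.map_mul_self, LinearMap.comp_apply, LinearMap.mulLeftRight_apply, mul_assoc,
      Units.mul_inv_cancel_left]
  · rw [hΦ, mul_assoc, Units.inv_mul_cancel_right, Units.inv_mul_cancel_left]
  · rw [mul_assoc, Units.mul_inv_cancel_right, Units.mul_inv_cancel_left]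

end IsShrinkingPreserver

theorem preserver_Mn_general {n : Type*} [Fintype n] [DecidableEq n] (hn : 3 ≤ Fintype.card n)
    (φ : Matrix n n ℂ → Matrix n n ℂ) (hcont : Continuous φ)
    (hcomm : ∀ X Y, X * Y = Y * X → φ X * φ Y = φ Y * φ X)
    (hshrink : ∀ X, spectrum ℂ (φ X) ⊆ spectrum ℂ X) :
    ∃ T : Matrix n n ℂ, IsUnit T ∧
      ((∀ X, φ X = T * X * T⁻¹) ∨ (∀ X, φ X = T * X.transpose * T⁻¹)) := by
  have hφ : IsShrinkingPreserver φ := ⟨hcont, fun {X Y} ↦ hcomm X Y, hshrink⟩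
  obtain ⟨S, Φ, hΦ, hφΦ⟩ := hφ.exists_eq_conj_isDiagonalFixingJordanHom hn
  have : Nonempty n := Fintype.card_pos_iff.1 (by lia)
  obtain ⟨T, T', hT, hΦT⟩ := hΦ.exists_eq_mul_mul_or_eq_mul_transpose_mul
  have hST : S.val * T * (T' * S⁻¹.val) = 1 := by
    rw [mul_assoc, ← mul_assoc T, hT, one_mul, S.mul_inv]
  refine ⟨S * T, .of_mul_eq_one _ hST, ?_⟩
  rw [inv_eq_right_inv hST]
  exact hΦT.imp (fun h X ↦ by simp only [hφΦ, h, mul_assoc])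
    fun h X ↦ by simp only [hφΦ, h, mul_assoc]

/-- (Strengthened Šemrl theorem.) For `n ≥ 3`, any continuous,
commutativity-preserving and spectrum-shrinking map `φ : M_n → M_n` is of the form
`φ(X) = T X T⁻¹` or `φ(X) = T Xᵗ T⁻¹` for some `T ∈ GL(n)`. -/
theorem preserver_Mn (n : ℕ) (hn : 3 ≤ n)
    (φ : Matrix (Fin n) (Fin n) ℂ → Matrix (Fin n) (Fin n) ℂ)
    (hcont : Continuous φ)
    (hcomm : ∀ X Y, X * Y = Y * X → φ X * φ Y = φ Y * φ X)
    (hshrink : ∀ X, spectrum ℂ (φ X) ⊆ spectrum ℂ X) :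
    ∃ T : Matrix (Fin n) (Fin n) ℂ, IsUnit T ∧
      ((∀ X, φ X = T * X * T⁻¹) ∨ (∀ X, φ X = T * X.transpose * T⁻¹)) := by
  exact preserver_Mn_general (by rwa [Fintype.card_fin]) φ hcont hcomm hshrink
end

section
/- Let n ≥ 3 and let GL(n)_ss denote the set of diagonalizable invertible n×n complex matrices, topologized as a subspace of M_n. A map φ : GL(n)_ss → M_n is continuous, commutativity-preserving and spectrum-shrinking if and only if there exists T ∈ GL(n) such that either φ(X) = T X T⁻¹ for all X ∈ GL(n)_ss, or φ(X) = T Xᵗ T⁻¹ for all X ∈ GL(n)_ss (where Xᵗ denotes the transpose). -/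
open Matrix

/-!
Write `X = P diag(d) P⁻¹` with `d` nowhere vanishing and with distinct entries. The eigenvalues of
`φ X` form a multiset of entries of `d`, whose indices do not depend on `(P, d)` by continuity and
connectedness; as relabelling the entries of `d` only changes `P`, every index occurs. Commutativity
then shows that `φ` maps the torus of `P` to a torus, and connectedness of the parameters `d` gives
`φ (P diag(d) P⁻¹) = Q diag(d) Q⁻¹` with `Q` depending on `P` only.

Consequently `X ↦ φ (1 + X) - 1`, on idempotents of rank one, has the same sum over every frame,
as in Gleason's theorem. For `n ≥ 3` comparing unipotently related frames makes its increments
additive, continuity of `φ` at `1` makes them linear, and `φ` is the restriction of a linear map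
`L`. By the spectral theorem `L` preserves squares of Hermitian matrices, so it is a Jordan
homomorphism, and its values on matrix units exhibit it as a conjugation, possibly after a
transposition.
-/

open Filter Topology

namespace SpectrumShrinking

theorem countable_setOf_eq_zero_of_differentiable {f : ℂ → ℂ} (hf : Differentiable ℂ f) {x : ℂ}
    (hx : f x ≠ 0) : {z | f z = 0}.Countable := by
  have hcodiscrete := AnalyticOnNhd.preimage_zero_mem_codiscrete (fun z _ => hf.analyticAt z) hx
  exact (HereditarilyLindelofSpace.isLindelof _).countable_of_isDiscrete
    (compl_mem_codiscrete_iff.mp hcodiscrete).2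

section EntireAlongLines

variable {E : Type*} [AddCommGroup E] [Module ℂ E] [TopologicalSpace E]
  [IsTopologicalAddGroup E] [ContinuousSMul ℂ E] {h : E → ℂ}

theorem isPreconnected_setOf_ne_zero (hh : ∀ p q, Differentiable ℂ fun z : ℂ => h (p + z • q)) :
    IsPreconnected {x | h x ≠ 0} := by
  refine isPreconnected_of_forall_pair fun x hx y hy => ?_
  let line : ℂ → E := fun z => x + z • (y - x)
  have hcount := countable_setOf_eq_zero_of_differentiable (hh x (y - x)) (x := 0)
    (by simpa using hx)
  have hconn := (hcount.isConnected_compl_of_one_lt_rank (by simp)).isPreconnected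
  refine ⟨line '' {z | h (line z) = 0}ᶜ, ?_, ⟨0, ?_, ?_⟩, ⟨1, ?_, ?_⟩, hconn.image _ ?_⟩
  · rintro _ ⟨z, hz, rfl⟩
    exact hz
  · simpa [line] using hx
  · simp [line]
  · simpa [line] using hy
  · simp [line]
  · exact Continuous.continuousOn (by fun_prop)

theorem dense_setOf_ne_zero (hh : ∀ p q, Differentiable ℂ fun z : ℂ => h (p + z • q)) {q : E}
    (hq : h q ≠ 0) : Dense {x | h x ≠ 0} := by
  intro p
  have hcount := countable_setOf_eq_zero_of_differentiable (hh p (q - p)) (x := 1)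
    (by simpa using hq)
  have hline : Continuous fun z : ℂ => p + z • (q - p) := by fun_prop
  simpa using map_mem_closure hline (hcount.dense_compl ℂ 0) fun z hz => hz

end EntireAlongLines

theorem exists_forall_mem_of_isClosed {X J : Type*} [TopologicalSpace X] [PreconnectedSpace X]
    [Nonempty X] [Finite J] {K : J → Set X} (hK : ∀ j, IsClosed (K j)) (hu : ∀ x, ∃! j, x ∈ K j) :
    ∃ j, ∀ x, x ∈ K j := by
  choose g hg hg_unique using hu
  let _ : TopologicalSpace J := ⊥
  have : DiscreteTopology J := ⟨rfl⟩
  have hcont : Continuous g := by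
    refine continuous_iff_isClosed.mpr fun s _ => ?_
    have hpre : g ⁻¹' s = ⋃ j ∈ s, K j := by
      ext x
      simp only [Set.mem_preimage, Set.mem_iUnion, exists_prop]
      exact ⟨fun h => ⟨g x, h, hg x⟩, fun ⟨j, hj, hx⟩ => hg_unique x j hx ▸ hj⟩
    rw [hpre]
    exact s.toFinite.isClosed_biUnion fun j _ => hK j
  obtain ⟨x₀⟩ := ‹Nonempty X›
  exact ⟨g x₀, fun x => PreconnectedSpace.constant ‹_› hcont (x := x) (y := x₀) ▸ hg x⟩

section Matrix

variable {ι : Type*} [Fintype ι] [DecidableEq ι]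

theorem isEmbedding_matrix_units_val {𝕜 : Type*} [Field 𝕜] [TopologicalSpace 𝕜]
    [IsTopologicalRing 𝕜] [ContinuousInv₀ 𝕜] :
    IsEmbedding (Units.val : (Matrix ι ι 𝕜)ˣ → Matrix ι ι 𝕜) := by
  refine Units.isEmbedding_val_mk' (f := Inv.inv) (fun A hA => ?_) fun u => (coe_units_inv u).symm
  have hdet : A.det ≠ 0 := ((isUnit_iff_isUnit_det A).mp hA).ne_zero
  refine (continuousAt_matrix_inv A ?_).continuousWithinAt
  rw [Ring.inverse_eq_inv']
  exact continuousAt_inv₀ hdet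

instance : PreconnectedSpace (Matrix ι ι ℂ)ˣ where
  isPreconnected_univ := by
    rw [← isEmbedding_matrix_units_val.isInducing.isPreconnected_image, Set.image_univ]
    have hrange : Set.range (Units.val : (Matrix ι ι ℂ)ˣ → Matrix ι ι ℂ) = {A | A.det ≠ 0} := by
      ext A
      exact (isUnit_iff_isUnit_det A).trans isUnit_iff_ne_zero
    rw [hrange]
    refine isPreconnected_setOf_ne_zero fun P Q => ?_
    simp only [det_apply, Matrix.add_apply, Matrix.smul_apply]
    fun_prop

end Matrix

section Generic

variable {ι : Type*}

/-- Nowhere vanishing vectors with pairwise distinct coordinates. -/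
def IsGeneric (d : ι → ℂ) : Prop := (∀ i, d i ≠ 0) ∧ Function.Injective d

theorem IsGeneric.comp_perm {d : ι → ℂ} (hd : IsGeneric d) (σ : Equiv.Perm ι) :
    IsGeneric (d ∘ σ) :=
  ⟨fun i => hd.1 (σ i), hd.2.comp σ.injective⟩

theorem setOf_isGeneric_eq [Fintype ι] : {d : ι → ℂ | IsGeneric d} =
    {d | (∏ i, d i) * ∏ q ∈ (Finset.univ : Finset ι).offDiag, (d q.1 - d q.2) ≠ 0} := by
  ext d
  simp only [IsGeneric, Function.Injective, mul_ne_zero_iff, Finset.prod_ne_zero_iff,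
    Finset.mem_offDiag, sub_ne_zero, Finset.mem_univ, true_and, forall_const, Prod.forall,
    ne_eq, Set.mem_ofPred_eq]
  grind

variable [Finite ι]

theorem exists_isGeneric : ∃ d : ι → ℂ, IsGeneric d :=
  ⟨fun i => (Finite.equivFin ι i : ℕ) + 1, fun i => Nat.cast_add_one_ne_zero _, fun i j hij => by
    simpa [Fin.val_inj] using hij⟩

instance : Nonempty {d : ι → ℂ // IsGeneric d} := nonempty_subtype.mpr exists_isGeneric

instance : PreconnectedSpace {d : ι → ℂ // IsGeneric d} := by
  cases nonempty_fintype ι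
  refine Subtype.preconnectedSpace (s := {d | IsGeneric d}) ?_
  rw [setOf_isGeneric_eq]
  exact isPreconnected_setOf_ne_zero fun p q => by
    simp only [Pi.add_apply, Pi.smul_apply]
    fun_prop

theorem dense_setOf_isGeneric : Dense {d : ι → ℂ | IsGeneric d} := by
  cases nonempty_fintype ι
  obtain ⟨d, hd⟩ := exists_isGeneric (ι := ι)
  have hd : d ∈ {d | IsGeneric d} := hd
  rw [setOf_isGeneric_eq] at hd ⊢
  exact dense_setOf_ne_zero (fun p q => by
    simp only [Pi.add_apply, Pi.smul_apply]
    fun_prop) hd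

end Generic

section ConjDiagonal

variable {𝕜 ι : Type*} [Field 𝕜] [Fintype ι] [DecidableEq ι]

/-- The torus of matrices diagonalized by `P`, parametrized by eigenvalue vectors. -/
def conjDiagonal (P : (Matrix ι ι 𝕜)ˣ) : (ι → 𝕜) →ₐ[𝕜] Matrix ι ι 𝕜 :=
  (MulSemiringAction.toAlgHom 𝕜 (Matrix ι ι 𝕜) (ConjAct.toConjAct P)).comp (diagonalAlgHom 𝕜)

theorem conjDiagonal_apply (P : (Matrix ι ι 𝕜)ˣ) (d : ι → 𝕜) :
    conjDiagonal P d = P * diagonal d * (P⁻¹ : (Matrix ι ι 𝕜)ˣ) := rfl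

@[simp]
theorem conjDiagonal_one (d : ι → 𝕜) : conjDiagonal 1 d = diagonal d := by
  simp [conjDiagonal_apply]

theorem conjDiagonal_mul (P Q : (Matrix ι ι 𝕜)ˣ) (d : ι → 𝕜) :
    conjDiagonal (P * Q) d = P * conjDiagonal Q d * (P⁻¹ : (Matrix ι ι 𝕜)ˣ) := by
  simp [conjDiagonal_apply, mul_assoc]

theorem inv_mul_conjDiagonal_mul (P : (Matrix ι ι 𝕜)ˣ) (d : ι → 𝕜) :
    (P⁻¹ : (Matrix ι ι 𝕜)ˣ) * conjDiagonal P d * P = diagonal d := by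
  simp [conjDiagonal_apply, mul_assoc]

theorem commute_conjDiagonal (P : (Matrix ι ι 𝕜)ˣ) (d e : ι → 𝕜) :
    Commute (conjDiagonal P d) (conjDiagonal P e) :=
  (Commute.all d e).map (conjDiagonal P)

theorem det_conjDiagonal (P : (Matrix ι ι 𝕜)ˣ) (d : ι → 𝕜) :
    (conjDiagonal P d).det = ∏ i, d i := by
  rw [conjDiagonal_apply, det_units_conj, det_diagonal]

theorem isUnit_conjDiagonal_iff {P : (Matrix ι ι 𝕜)ˣ} {d : ι → 𝕜} :
    IsUnit (conjDiagonal P d) ↔ ∀ i, d i ≠ 0 := by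
  simp [isUnit_iff_isUnit_det, det_conjDiagonal, Finset.prod_ne_zero_iff]

theorem spectrum_conjDiagonal (P : (Matrix ι ι 𝕜)ˣ) (d : ι → 𝕜) :
    spectrum 𝕜 (conjDiagonal P d) = Set.range d := by
  rw [conjDiagonal_apply, spectrum.units_conjugate, spectrum_diagonal]

theorem conjDiagonal_single (P : (Matrix ι ι 𝕜)ˣ) (i : ι) :
    conjDiagonal P (Pi.single i 1) = P * single i i (1 : 𝕜) * (P⁻¹ : (Matrix ι ι 𝕜)ˣ) := by
  rw [conjDiagonal_apply, diagonal_single]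

theorem conjDiagonal_eq_sum (P : (Matrix ι ι 𝕜)ˣ) (d : ι → 𝕜) :
    conjDiagonal P d = ∑ i, d i • conjDiagonal P (Pi.single i 1) := by
  conv_lhs => rw [pi_eq_sum_univ' d, map_sum]
  simp only [map_smul]

theorem exists_transpose_conjDiagonal_eq (P : (Matrix ι ι 𝕜)ˣ) :
    ∃ Q, ∀ d, (conjDiagonal P d)ᵀ = conjDiagonal Q d :=
  ⟨⟨(P⁻¹).valᵀ, P.valᵀ, by simp [← transpose_mul], by simp [← transpose_mul]⟩, fun d => by
    simp [conjDiagonal_apply, mul_assoc]⟩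

theorem exists_conjDiagonal_comp_perm_eq (P : (Matrix ι ι 𝕜)ˣ) (σ : Equiv.Perm ι) :
    ∃ Q, ∀ d, conjDiagonal Q (d ∘ σ) = conjDiagonal P d :=
  ⟨⟨P.val.submatrix id σ, (P⁻¹).val.submatrix σ id, by simp, by
    rw [← submatrix_mul _ _ σ id σ Function.bijective_id]; simp⟩, fun d => by
    simp [conjDiagonal_apply, ← submatrix_diagonal_equiv]⟩

theorem exists_eq_conjDiagonal_of_commute {A : Matrix ι ι 𝕜} {P : (Matrix ι ι 𝕜)ˣ} {d : ι → 𝕜}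
    (hd : Function.Injective d) (hA : Commute A (conjDiagonal P d)) :
    ∃ e, A = conjDiagonal P e := by
  set B := (P⁻¹).val * A * P with hB
  have hAB : A = P * B * (P⁻¹).val := by simp [hB, mul_assoc]
  have hcomm : B * diagonal d = diagonal d * B := by
    have := congr((P⁻¹).val * $(hA.eq) * P)
    simpa [conjDiagonal_apply, hAB, mul_assoc] using this
  refine ⟨B.diag, ?_⟩
  rw [hAB, conjDiagonal_apply]
  congr 2
  ext i j
  rcases eq_or_ne i j with rfl | hij
  · simp
  · have := congr_fun₂ hcomm i j
    rw [mul_diagonal, diagonal_mul, mul_comm, mul_eq_mul_right_iff] at this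
    simpa [hij] using this.resolve_left (hd.ne hij.symm)

theorem exists_eq_conjDiagonal_of_mem_spectrum {A : Matrix ι ι 𝕜} {d : ι → 𝕜}
    (hd : Function.Injective d) (hA : ∀ i, d i ∈ spectrum 𝕜 A) :
    ∃ P, A = conjDiagonal P d := by
  have heigen (i : ι) : ∃ v, Module.End.HasEigenvector (toLin' A) (d i) v := by
    rw [← spectrum_toLin'] at hA
    exact (Module.End.hasEigenvalue_iff_mem_spectrum.mpr (hA i)).exists_hasEigenvector
  choose v hv using heigen
  have hunit : IsUnit (of v)ᵀ := linearIndependent_cols_iff_isUnit.mp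
    (Module.End.eigenvectors_linearIndependent' _ d hd v hv)
  have hAv : A * (of v)ᵀ = (of v)ᵀ * diagonal d := by
    ext k i
    refine (congrFun (hv i).apply_eq_smul k).trans ?_
    simp [mul_diagonal, mul_comm]
  refine ⟨hunit.unit, ?_⟩
  rw [conjDiagonal_apply, Units.eq_mul_inv_iff_mul_eq]
  exact hAv

end ConjDiagonal

section Preserver

variable {ι : Type*} [Fintype ι] [DecidableEq ι]

/-- `GL(n)_ss` as a set of matrices, in the form in which the theorem states it. -/
def invertibleSemisimple (ι : Type*) [Fintype ι] [DecidableEq ι] : Set (Matrix ι ι ℂ) :=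
  {X | IsUnit X ∧ ∃ (P : Matrix ι ι ℂ) (d : ι → ℂ), IsUnit P ∧ X = P * diagonal d * P⁻¹}

theorem mem_invertibleSemisimple_iff {X : Matrix ι ι ℂ} :
    X ∈ invertibleSemisimple ι ↔ ∃ P d, (∀ i, d i ≠ 0) ∧ conjDiagonal P d = X := by
  constructor
  · rintro ⟨hX, P, d, hP, rfl⟩
    lift P to (Matrix ι ι ℂ)ˣ using hP
    rw [← coe_units_inv, ← conjDiagonal_apply] at hX ⊢
    exact ⟨P, d, isUnit_conjDiagonal_iff.mp hX, rfl⟩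
  · rintro ⟨P, d, hd, rfl⟩
    exact ⟨isUnit_conjDiagonal_iff.mpr hd, P, d, P.isUnit, by
      rw [conjDiagonal_apply, coe_units_inv]⟩

theorem conjDiagonal_mem_invertibleSemisimple (P : (Matrix ι ι ℂ)ˣ) {d : ι → ℂ}
    (hd : ∀ i, d i ≠ 0) : conjDiagonal P d ∈ invertibleSemisimple ι :=
  mem_invertibleSemisimple_iff.mpr ⟨P, d, hd, rfl⟩

/-- The hypotheses of the theorem, for a map defined on all matrices but constrained only on
`GL(n)_ss`. -/
structure IsPreserver (ψ : Matrix ι ι ℂ → Matrix ι ι ℂ) : Prop where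
  continuousOn : ContinuousOn ψ (invertibleSemisimple ι)
  commute : ∀ X ∈ invertibleSemisimple ι, ∀ Y ∈ invertibleSemisimple ι,
    Commute X Y → Commute (ψ X) (ψ Y)
  spectrum_subset : ∀ X ∈ invertibleSemisimple ι, spectrum ℂ (ψ X) ⊆ spectrum ℂ X

theorem continuous_conjDiagonal {𝕜 : Type*} [Field 𝕜] [TopologicalSpace 𝕜] [IsTopologicalRing 𝕜]
    (P : (Matrix ι ι 𝕜)ˣ) : Continuous (conjDiagonal P) := by
  simp only [funext (conjDiagonal_apply P)]
  fun_prop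

theorem roots_charpoly_eq_iff {𝕜 : Type*} [Field 𝕜] [IsAlgClosed 𝕜] {A : Matrix ι ι 𝕜}
    {t : Multiset 𝕜} :
    A.charpoly.roots = t ↔ ∀ z, (scalar ι z - A).det = (t.map fun a => z - a).prod := by
  have hprod := (IsAlgClosed.splits A.charpoly).eq_prod_roots_of_monic A.charpoly_monic
  constructor
  · rintro rfl z
    rw [← eval_charpoly, hprod, Polynomial.eval_multiset_prod, Multiset.map_map, ← hprod]
    simp
  · intro h
    rw [← Polynomial.roots_multiset_prod_X_sub_C t]
    congr 1
    refine Polynomial.funext fun z => ?_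
    rw [eval_charpoly, h, Polynomial.eval_multiset_prod, Multiset.map_map]
    simp

theorem isClosed_setOf_roots_charpoly_eq_map {X : Type*} [TopologicalSpace X]
    {A : X → Matrix ι ι ℂ} {d : X → ι → ℂ} (hA : Continuous A) (hd : Continuous d)
    (s : Multiset ι) : IsClosed {x | (A x).charpoly.roots = s.map (d x)} := by
  simp only [roots_charpoly_eq_iff, Multiset.map_map, Function.comp_apply, Set.ofPred_forall]
  exact isClosed_iInter fun z =>
    isClosed_eq (by fun_prop) (continuous_multiset_prod _ fun i _ => by fun_prop)

namespace IsPreserver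

variable {ψ : Matrix ι ι ℂ → Matrix ι ι ℂ}

theorem existsUnique_roots_charpoly_eq_map (hψ : IsPreserver ψ) (P : (Matrix ι ι ℂ)ˣ) {d : ι → ℂ}
    (hd : IsGeneric d) :
    ∃! s : Sym ι (Fintype.card ι), (ψ (conjDiagonal P d)).charpoly.roots = s.1.map d := by
  set p := (ψ (conjDiagonal P d)).charpoly
  have hrange : ∀ a ∈ p.roots, a ∈ Set.range d := fun a ha => by
    rw [← spectrum_conjDiagonal P]
    exact hψ.spectrum_subset _ (conjDiagonal_mem_invertibleSemisimple P hd.1)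
      (mem_spectrum_of_isRoot_charpoly (Polynomial.isRoot_of_mem_roots ha))
  have hcard : p.roots.card = Fintype.card ι :=
    (IsAlgClosed.splits p).natDegree_eq_card_roots.symm.trans (charpoly_natDegree_eq_dim _)
  have : CanLift ℂ ι d (· ∈ Set.range d) := ⟨fun _ ha => ha⟩
  obtain ⟨s, hs⟩ := CanLift.prf (coe := Multiset.map d) p.roots hrange
  refine ⟨⟨s, by rw [← hcard, ← hs, Multiset.card_map]⟩, hs.symm, fun t ht => ?_⟩
  exact Subtype.ext (Multiset.map_injective hd.2 (ht.symm.trans hs.symm))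

theorem continuous_comp_conjDiagonal (hψ : IsPreserver ψ) {X : Type*} [TopologicalSpace X]
    {P : X → (Matrix ι ι ℂ)ˣ} {d : X → ι → ℂ} (hP : Continuous P) (hd : Continuous d)
    (hne : ∀ x i, d x i ≠ 0) : Continuous fun x => ψ (conjDiagonal (P x) (d x)) := by
  refine hψ.continuousOn.comp_continuous (f := fun x => conjDiagonal (P x) (d x)) ?_ fun x =>
    conjDiagonal_mem_invertibleSemisimple (P x) (hne x)
  simp only [conjDiagonal_apply]
  fun_prop

theorem exists_roots_charpoly_eq_map (hψ : IsPreserver ψ) :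
    ∃ s : Sym ι (Fintype.card ι), ∀ P d, IsGeneric d →
      (ψ (conjDiagonal P d)).charpoly.roots = s.1.map d := by
  have hcont : Continuous fun x : (Matrix ι ι ℂ)ˣ × {d : ι → ℂ // IsGeneric d} =>
      ψ (conjDiagonal x.1 x.2) :=
    hψ.continuous_comp_conjDiagonal (by fun_prop) (by fun_prop) fun x => x.2.2.1
  obtain ⟨s, hs⟩ := exists_forall_mem_of_isClosed
    (fun s : Sym ι (Fintype.card ι) => isClosed_setOf_roots_charpoly_eq_map hcont
      (continuous_subtype_val.comp continuous_snd) s.1)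
    fun x => hψ.existsUnique_roots_charpoly_eq_map x.1 x.2.2
  exact ⟨s, fun P d hd => hs (P, ⟨d, hd⟩)⟩

/- Relabelling the eigenvalues by a permutation is a change of `P`, so the constant multiset of
indices of eigenvalues of `ψ (conjDiagonal P d)` is invariant under all permutations. -/
theorem mem_spectrum (hψ : IsPreserver ψ) (P : (Matrix ι ι ℂ)ˣ) {d : ι → ℂ} (hd : IsGeneric d)
    (i : ι) : d i ∈ spectrum ℂ (ψ (conjDiagonal P d)) := by
  obtain ⟨s, hs⟩ := hψ.exists_roots_charpoly_eq_map
  have hperm (σ : Equiv.Perm ι) : s.1 = s.1.map σ := by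
    obtain ⟨Q, hQ⟩ := exists_conjDiagonal_comp_perm_eq P σ
    refine Multiset.map_injective hd.2 ?_
    rw [Multiset.map_map, ← hs P d hd, ← hs Q (d ∘ σ) (hd.comp_perm σ), hQ]
  obtain ⟨j, hj⟩ : ∃ j, j ∈ s.1 := by
    refine Multiset.card_pos_iff_exists_mem.mp ?_
    rw [s.2]
    exact Fintype.card_pos_iff.mpr ⟨i⟩
  have hi : i ∈ s.1 := by
    rw [hperm (Equiv.swap j i)]
    exact Multiset.mem_map.mpr ⟨j, hj, Equiv.swap_apply_left j i⟩
  refine mem_spectrum_of_isRoot_charpoly (Polynomial.isRoot_of_mem_roots ?_)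
  rw [hs P d hd]
  exact Multiset.mem_map_of_mem d hi

theorem exists_continuous_eigenvalues (hψ : IsPreserver ψ) (P : (Matrix ι ι ℂ)ˣ) :
    ∃ (Q : (Matrix ι ι ℂ)ˣ) (eig : {d : ι → ℂ // IsGeneric d} → ι → ℂ), Continuous eig ∧
      (∃ d₀, eig d₀ = d₀.1) ∧ ∀ d, ψ (conjDiagonal P d.1) = conjDiagonal Q (eig d) := by
  obtain ⟨d₀, hd₀⟩ := exists_isGeneric (ι := ι)
  obtain ⟨Q, hQ⟩ := exists_eq_conjDiagonal_of_mem_spectrum hd₀.2 (hψ.mem_spectrum P hd₀)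
  let eig (d : {d : ι → ℂ // IsGeneric d}) : ι → ℂ :=
    ((Q⁻¹).val * ψ (conjDiagonal P d) * Q).diag
  have heig {d : {d : ι → ℂ // IsGeneric d}} {e} (h : ψ (conjDiagonal P d) = conjDiagonal Q e) :
      eig d = e := by
    simp only [eig, h, inv_mul_conjDiagonal_mul, diag_diagonal]
  refine ⟨Q, eig, ?_, ⟨⟨d₀, hd₀⟩, heig (d := ⟨d₀, hd₀⟩) hQ⟩, fun d => ?_⟩
  · have := hψ.continuous_comp_conjDiagonal (P := fun _ => P) (d := Subtype.val)
      continuous_const continuous_subtype_val fun d : {d : ι → ℂ // IsGeneric d} => d.2.1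
    exact ((continuous_const.mul this).mul continuous_const).matrix_diag
  · obtain ⟨e, he⟩ := exists_eq_conjDiagonal_of_commute hd₀.2 <| hQ ▸ hψ.commute _
      (conjDiagonal_mem_invertibleSemisimple P d.2.1) _
      (conjDiagonal_mem_invertibleSemisimple P hd₀.1) (commute_conjDiagonal P d d₀)
    rw [heig he, he]

theorem exists_forall_isGeneric_eq_conjDiagonal (hψ : IsPreserver ψ) (P : (Matrix ι ι ℂ)ˣ) :
    ∃ Q, ∀ d, IsGeneric d → ψ (conjDiagonal P d) = conjDiagonal Q d := by
  obtain ⟨Q, eig, heig_cont, ⟨d₀, hd₀⟩, hψ_eig⟩ := hψ.exists_continuous_eigenvalues P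
  have heig_range (d : {d : ι → ℂ // IsGeneric d}) (i : ι) : ∃ j, d.1 j = eig d i := by
    have hsub := hψ.spectrum_subset _ (conjDiagonal_mem_invertibleSemisimple P d.2.1)
    rw [hψ_eig, spectrum_conjDiagonal, spectrum_conjDiagonal] at hsub
    exact hsub ⟨i, rfl⟩
  refine ⟨Q, fun d hd => (hψ_eig ⟨d, hd⟩).trans (congrArg _ (funext fun i => ?_))⟩
  obtain ⟨j, hj⟩ := exists_forall_mem_of_isClosed
    (K := fun j => {d : {d : ι → ℂ // IsGeneric d} | d.1 j = eig d i})
    (fun j => isClosed_eq ((continuous_apply j).comp continuous_subtype_val) (by fun_prop)) fun d =>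
      (heig_range d i).elim fun j hj => ⟨j, hj, fun k hk => d.2.2 (hk.trans hj.symm)⟩
  obtain rfl : j = i := d₀.2.2 ((hj d₀).trans (congrFun hd₀ i))
  exact (hj ⟨d, hd⟩).symm

theorem exists_forall_eq_conjDiagonal (hψ : IsPreserver ψ) (P : (Matrix ι ι ℂ)ˣ) :
    ∃ Q, ∀ d, (∀ i, d i ≠ 0) → ψ (conjDiagonal P d) = conjDiagonal Q d := by
  obtain ⟨Q, hQ⟩ := hψ.exists_forall_isGeneric_eq_conjDiagonal P
  have hmaps : Set.MapsTo (conjDiagonal P) {d | ∀ i, d i ≠ 0} (invertibleSemisimple ι) :=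
    fun d hd => conjDiagonal_mem_invertibleSemisimple P hd
  exact ⟨Q, Set.EqOn.of_subset_closure (s := {d | IsGeneric d}) (fun d hd => hQ d hd)
    (hψ.continuousOn.comp (continuous_conjDiagonal P).continuousOn hmaps)
    (continuous_conjDiagonal Q).continuousOn (fun d hd => hd.1)
    (by rw [dense_setOf_isGeneric.closure_eq]; exact Set.subset_univ _)⟩

end IsPreserver

end Preserver

section FrameFunction

/-- The unit `1 - N` of inverse `1 + N`, for `N` of square zero. -/
@[simps]
def unipotentUnit {S : Type*} [Ring S] (N : S) (hN : N * N = 0) : Sˣ where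
  val := 1 - N
  inv := 1 + N
  val_inv := by simp [sub_mul, mul_add, hN]
  inv_val := by simp [add_mul, mul_sub, hN]

variable {R ι E : Type*} [CommRing R] [DecidableEq ι] [AddCommGroup E]

/-- The variation of `G` between the idempotents `single i i 1` and `single i i 1 + single i j s`
(for `i ≠ j`). -/
def increment (G : Matrix ι ι R → E) (i j : ι) (s : R) : E :=
  G (single i i 1 + single i j s) - G (single i i 1)

@[simp]
theorem increment_zero (G : Matrix ι ι R → E) (i j : ι) : increment G i j 0 = 0 := by
  simp [increment]

theorem vecMulVec_single_single (i j : ι) (s : R) :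
    vecMulVec (Pi.single i 1) (Pi.single j s) = single i j s := by
  ext a b
  rcases eq_or_ne a i with rfl | ha <;> rcases eq_or_ne b j with rfl | hb <;>
    simp [vecMulVec_apply, *, Ne.symm]

variable [Fintype ι]

/-- As in Gleason's theorem, a function whose sum over a frame, that is, over the rank-one
idempotents `P * single i i 1 * P⁻¹` attached to a basis, does not depend on the frame. -/
def IsFrameFunction (G : Matrix ι ι R → E) : Prop :=
  ∀ P : (Matrix ι ι R)ˣ, ∑ i, G (P.val * single i i 1 * P⁻¹.val) = ∑ i, G (single i i 1)

theorem one_sub_mul_single_mul_one_add {i : ι} {v : ι → R} (hv : v i = 0) (j : ι) :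
    (1 - vecMulVec (Pi.single i 1) v) * single j j 1 * (1 + vecMulVec (Pi.single i 1) v) =
      single j j 1 - single i j (v j) + if j = i then vecMulVec (Pi.single i 1) v else 0 := by
  have hcol : vecMulVec (Pi.single i 1) v * single j j 1 = single i j (v j) := by
    ext a b
    rcases eq_or_ne b j with rfl | hb
    · simp [vecMulVec_apply, single_apply, Pi.single_apply, eq_comm]
    · simp [hb, hb.symm]
  have hrow (a : ι) (s : R) : single a j s * vecMulVec (Pi.single i 1) v =
      if j = i then s • vecMulVec (Pi.single a 1) v else 0 := by
    rw [mul_vecMulVec, single_mulVec_eq, Pi.single_apply]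
    split_ifs <;> simp [smul_vecMulVec]
  rw [sub_mul, one_mul, hcol, mul_add, mul_one, sub_mul, hrow, hrow]
  rcases eq_or_ne j i with rfl | hij
  · simp [hv]
  · simp [hij]

namespace IsFrameFunction

variable {G : Matrix ι ι R → E}

theorem comp_conj (hG : IsFrameFunction G) (P : (Matrix ι ι R)ˣ) :
    IsFrameFunction fun X : Matrix ι ι R => G (P * X * P⁻¹.val) := fun Q => by
  have hPQ := (hG (P * Q)).trans (hG P).symm
  simpa [mul_assoc] using hPQ

theorem comp_transpose (hG : IsFrameFunction G) : IsFrameFunction fun X => G Xᵀ := fun P => by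
  simpa [mul_assoc] using
    hG ⟨(P⁻¹).valᵀ, P.valᵀ, by simp [← transpose_mul], by simp [← transpose_mul]⟩

theorem comp_one_sub (hG : IsFrameFunction G) {N : Matrix ι ι R} (hN : N * N = 0) :
    IsFrameFunction fun X => G ((1 - N) * X * (1 + N)) :=
  hG.comp_conj (unipotentUnit N hN)

theorem map_add_vecMulVec_add_sum (hG : IsFrameFunction G) {i : ι} {v : ι → R} (hv : v i = 0) :
    G (single i i 1 + vecMulVec (Pi.single i 1) v) + ∑ j, G (single j j 1 - single i j (v j)) =
      G (single i i 1) + ∑ j, G (single j j 1) := by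
  set N := vecMulVec (Pi.single i 1) v
  have hN : N * N = 0 := by simp [N, vecMulVec_mul_vecMulVec, hv]
  have hterm (j : ι) : G (single j j 1 - single i j (v j) + if j = i then N else 0) =
      G (single j j 1 - single i j (v j)) +
        if j = i then G (single i i 1 + N) - G (single i i 1) else 0 := by
    split_ifs with h
    · simp [h, hv]
    · simp
  have hframe : ∑ j, G (single j j 1 - single i j (v j) + if j = i then N else 0) =
      ∑ j, G (single j j 1) := by
    simpa only [val_unipotentUnit, val_inv_unipotentUnit, N, one_sub_mul_single_mul_one_add hv]
      using hG (unipotentUnit N hN)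
  simp only [hterm, Finset.sum_add_distrib, Finset.sum_ite_eq', Finset.mem_univ, if_true]
    at hframe
  rw [← hframe]
  abel

theorem map_sub_single (hG : IsFrameFunction G) {i j : ι} (hij : i ≠ j) (s : R) :
    G (single j j 1 - single i j s) = G (single j j 1) - increment G i j s := by
  have hsum := hG.map_add_vecMulVec_add_sum (i := i) (v := Pi.single j s)
    (by simp [hij])
  rw [← Finset.add_sum_erase _ _ (Finset.mem_univ j),
    ← Finset.add_sum_erase _ (fun k => G (single k k 1)) (Finset.mem_univ j)] at hsum
  have hrest : ∑ k ∈ Finset.univ.erase j, G (single k k 1 - single i k (Pi.single j s k)) =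
      ∑ k ∈ Finset.univ.erase j, G (single k k 1) :=
    Finset.sum_congr rfl fun k hk => by simp [Finset.ne_of_mem_erase hk]
  rw [hrest, Pi.single_eq_same, vecMulVec_single_single] at hsum
  rw [increment]
  grind

theorem map_add_vecMulVec (hG : IsFrameFunction G) {i : ι} {v : ι → R} (hv : v i = 0) :
    G (single i i 1 + vecMulVec (Pi.single i 1) v) =
      G (single i i 1) + ∑ j, increment G i j (v j) := by
  have hincrement (j : ι) : G (single j j 1 - single i j (v j)) =
      G (single j j 1) - increment G i j (v j) := by
    rcases eq_or_ne i j with rfl | hij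
    · simp [hv]
    · exact hG.map_sub_single hij _
  have hsum := hG.map_add_vecMulVec_add_sum hv
  simp only [hincrement, Finset.sum_sub_distrib] at hsum
  grind

theorem map_add_single_add_single (hG : IsFrameFunction G) {i j k : ι} (hij : i ≠ j) (hik : i ≠ k)
    (hjk : j ≠ k) (s t : R) :
    G (single i i 1 + (single i j s + single i k t)) =
      G (single i i 1) + (increment G i j s + increment G i k t) := by
  have hsum := hG.map_add_vecMulVec (i := i) (v := Pi.single j s + Pi.single k t)
    (by simp [hij, hik])
  rw [vecMulVec_add, vecMulVec_single_single, vecMulVec_single_single] at hsum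
  rw [hsum, Fintype.sum_eq_add j k hjk fun l hl => by simp [hl.1, hl.2]]
  simp [hjk, hjk.symm]

theorem increment_add (hG : IsFrameFunction G) {i j k : ι} (hij : i ≠ j) (hik : i ≠ k)
    (hjk : j ≠ k) (s t : R) :
    increment G i k (s + t) = increment G i k s + increment G i k t := by
  have hconj := hG.comp_one_sub (N := single j k s) (by simp [hjk.symm])
  have hrow := hconj.map_add_single_add_single hij hik hjk 1 t
  have hs := hG.map_add_single_add_single hij hik hjk 1 s
  have hst := hG.map_add_single_add_single hij hik hjk 1 (s + t)
  simp only [increment, single_add, mul_add, sub_mul, add_mul, one_mul, mul_one, sub_zero, add_zero,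
    zero_add, add_assoc, single_mul_single_same, single_mul_single_of_ne, ne_eq, hij, hik.symm,
    hjk.symm, not_false_eq_true] at hrow hs hst ⊢
  grind

theorem exists_addMonoidHom_eq_increment (hG : IsFrameFunction G) (hι : 3 ≤ Fintype.card ι)
    {i k : ι} (hik : i ≠ k) : ∃ α : R →+ E, ∀ s, increment G i k s = α s := by
  obtain ⟨j, hji, hjk⟩ := ENat.exists_ne_ne_of_three_le (by simpa using hι) i k
  exact ⟨AddMonoidHom.mk' (increment G i k) (hG.increment_add hji.symm hik hjk), fun _ => rfl⟩

theorem map_add_single_self_col (hG : IsFrameFunction G) (hι : 3 ≤ Fintype.card ι) {i k : ι}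
    (hik : i ≠ k) (s : R) :
    G (single k k 1 + single i k s) = G (single k k 1) + increment G i k s := by
  obtain ⟨α, hα⟩ := hG.exists_addMonoidHom_eq_increment hι hik
  simpa [hα, ← single_neg] using hG.map_sub_single hik (-s)

theorem map_add_single_add_single_col (hG : IsFrameFunction G) (hι : 3 ≤ Fintype.card ι)
    {i j k : ι} (hij : i ≠ j) (hik : i ≠ k) (hjk : j ≠ k) (s t : R) :
    G (single k k 1 + (single i k s + single j k t)) =
      G (single k k 1) + (increment G i k s + increment G j k t) := by
  simpa [increment, hG.map_add_single_self_col hι, hik, hjk] using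
    hG.comp_transpose.map_add_single_add_single hik.symm hjk.symm hij s t

theorem map_one_sub_single_mul (hG : IsFrameFunction G) (hι : 3 ≤ Fintype.card ι)
    {i j k : ι} (hij : i ≠ j) (hik : i ≠ k) (hjk : j ≠ k) (s t : R) :
    G ((1 - single i j s) * (single j j 1 + single j k t)) =
      G (single j j 1) - increment G i j s + increment G j k t + increment G i k (-(s * t)) := by
  have hconj := hG.comp_one_sub (N := single i j s) (by simp [hij.symm])
  have hinc := hconj.map_add_single_self_col hι hjk t
  have hcol := hG.map_add_single_add_single_col hι hij.symm hjk hik t (-(s * t))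
  have hsub := hG.map_sub_single hij s
  rw [increment] at hinc
  simp only [mul_add, sub_mul, add_mul, one_mul, mul_one, sub_self, sub_zero, add_zero,
    ← single_neg, ← sub_eq_add_neg, single_mul_single_same, single_mul_single_of_ne, ne_eq,
    hij.symm, hik.symm,
    hjk, not_false_eq_true] at hinc hcol hsub ⊢
  grind

end IsFrameFunction

end FrameFunction

section ContinuousFrameFunction

theorem exists_conjDiagonal_single_eq {𝕜 ι : Type*} [Field 𝕜] [Fintype ι] [DecidableEq ι]
    {i j k : ι} (hij : i ≠ j) (hik : i ≠ k) (hjk : j ≠ k) (s t r : 𝕜) :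
    ∃ P, conjDiagonal P (Pi.single i 1) = single i i 1 + (single i j s + single i k r) ∧
      conjDiagonal P (Pi.single j 1) = (1 - single i j s) * (single j j 1 + single j k t) := by
  let T := unipotentUnit (single i j s + single i k r)
    (by simp [mul_add, add_mul, hij.symm, hik.symm])
  let S := unipotentUnit (single j k t) (by simp [hjk.symm])
  refine ⟨T * S, ?_, ?_⟩ <;>
    simp [conjDiagonal_single, T, S, sub_mul, add_mul, mul_add, hij, hjk, hij.symm, hik.symm,
      hjk.symm]

-- As `x → ∞` the frame degenerates, yet its combination tends to `0`.
theorem IsFrameFunction.exists_sum_smul_eq {𝕜 ι E : Type*} [Field 𝕜] [Fintype ι] [DecidableEq ι]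
    [AddCommGroup E] [Module 𝕜 E] {G : Matrix ι ι 𝕜 → E} (hG : IsFrameFunction G)
    (hι : 3 ≤ Fintype.card ι) {i j k : ι} (hij : i ≠ j) (hik : i ≠ k) (hjk : j ≠ k) {x : 𝕜}
    (hx : x ≠ 0) (a : 𝕜)
    (hmul : ∀ p q, p ≠ q → ∀ y, increment G p q (x * y) = x • increment G p q y) :
    ∃ P c, conjDiagonal P c = x⁻¹ ^ 2 • (a • single i i 1 + single j j 1) +
        x⁻¹ • ((a ^ 2 - a) • single i j 1 + single j k 1) ∧
      ∑ l, c l • G (conjDiagonal P (Pi.single l 1)) =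
        x⁻¹ ^ 2 • (a • G (single i i 1) + G (single j j 1)) +
          x⁻¹ • ((a - 1) • increment G i j a + increment G j k 1) +
          (a • increment G i k 1 - increment G i k a) := by
  obtain ⟨P, hPi, hPj⟩ :=
    exists_conjDiagonal_single_eq hij hik hjk (x * a) (x * 1) (x * (x * 1))
  refine ⟨P, x⁻¹ ^ 2 • (a • Pi.single i 1 + Pi.single j 1), ?_, ?_⟩
  · have hsingle (p q : ι) (y : 𝕜) : single p q y = y • single p q 1 := by simp [smul_single]
    simp only [map_smul, map_add, hPi, hPj, sub_mul, mul_add, one_mul, mul_one,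
      single_mul_single_same]
    rw [hsingle i j (_ * _), hsingle i k (_ * x), hsingle i k (_ * a * _), hsingle j k x]
    match_scalars <;> field_simp <;> ring
  · have hneg : increment G i k (-a) = -increment G i k a := by
      obtain ⟨α, hα⟩ := hG.exists_addMonoidHom_eq_increment hι hik
      simp [hα]
    rw [Fintype.sum_eq_add i j hij fun l hl => by simp [hl.1, hl.2], hPi, hPj,
      hG.map_add_single_add_single hij hik hjk, hG.map_one_sub_single_mul hι hij hik hjk,
      show -(x * a * (x * 1)) = x * (x * -a) by ring]
    simp only [hmul i j hij, hmul i k hik, hmul j k hjk, hneg, Pi.smul_apply, Pi.add_apply,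
      Pi.single_eq_same, Pi.single_eq_of_ne hij, Pi.single_eq_of_ne hij.symm,
      smul_eq_mul]
    match_scalars <;> field_simp <;> ring

variable {𝕜 ι E : Type*} [Fintype ι] [DecidableEq ι] [AddCommGroup E] [TopologicalSpace E]

/-- A frame function whose extension to diagonalizable matrices, linear along every frame, is
continuous at `0` uniformly in the frame. -/
structure IsContinuousFrameFunction [Field 𝕜] [TopologicalSpace 𝕜] [Module 𝕜 E]
    (G : Matrix ι ι 𝕜 → E) : Prop where
  isFrameFunction : IsFrameFunction G
  tendsto : ∀ (P : ℕ → (Matrix ι ι 𝕜)ˣ) (c : ℕ → ι → 𝕜),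
    Tendsto (fun N => conjDiagonal (P N) (c N)) atTop (𝓝 0) →
      Tendsto (fun N => ∑ i, c N i • G (conjDiagonal (P N) (Pi.single i 1))) atTop (𝓝 0)

namespace IsContinuousFrameFunction

section Field

variable [Field 𝕜] [TopologicalSpace 𝕜] [Module 𝕜 E] {G : Matrix ι ι 𝕜 → E}

theorem comp_conj [IsTopologicalRing 𝕜] (hG : IsContinuousFrameFunction G) (T : (Matrix ι ι 𝕜)ˣ) :
    IsContinuousFrameFunction fun X : Matrix ι ι 𝕜 => G (T * X * T⁻¹.val) where
  isFrameFunction := hG.isFrameFunction.comp_conj T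
  tendsto P c hP := by
    simp only [← conjDiagonal_mul]
    refine hG.tendsto (fun N => T * P N) c ?_
    have := (hP.const_mul T.val).mul_const T⁻¹.val
    simpa [conjDiagonal_mul] using this

theorem comp_transpose (hG : IsContinuousFrameFunction G) :
    IsContinuousFrameFunction fun X => G Xᵀ where
  isFrameFunction := hG.isFrameFunction.comp_transpose
  tendsto P c hP := by
    choose Q hQ using fun N => exists_transpose_conjDiagonal_eq (P N)
    simp only [hQ]
    refine hG.tendsto Q c ?_
    simpa [Function.comp_def, hQ] using
      ((continuous_id.matrix_transpose).tendsto (0 : Matrix ι ι 𝕜)).comp hP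

end Field

theorem increment_eq_smul [RCLike 𝕜] [Module 𝕜 E] [T2Space E] [ContinuousAdd E]
    [ContinuousSMul 𝕜 E] {G : Matrix ι ι 𝕜 → E} (hG : IsContinuousFrameFunction G)
    (hι : 3 ≤ Fintype.card ι) {i k : ι} (hik : i ≠ k) (a : 𝕜) :
    increment G i k a = a • increment G i k 1 := by
  obtain ⟨j, hji, hjk⟩ := ENat.exists_ne_ne_of_three_le (by simpa using hι) i k
  have hmul (N : ℕ) (p q : ι) (hpq : p ≠ q) (y : 𝕜) :
      increment G p q (((N + 1 : ℕ) : 𝕜) * y) = ((N + 1 : ℕ) : 𝕜) • increment G p q y := by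
    obtain ⟨α, hα⟩ := hG.isFrameFunction.exists_addMonoidHom_eq_increment hι hpq
    rw [hα, hα, ← nsmul_eq_mul, map_nsmul, Nat.cast_smul_eq_nsmul]
  choose P c hPc hsum using fun N : ℕ => hG.isFrameFunction.exists_sum_smul_eq hι hji.symm hik hjk
    (Nat.cast_ne_zero.mpr N.succ_ne_zero) a (hmul N)
  have hinv : Tendsto (fun N : ℕ => ((N + 1 : ℕ) : 𝕜)⁻¹) atTop (𝓝 0) :=
    (tendsto_add_atTop_iff_nat 1).mpr tendsto_inv_atTop_nhds_zero_nat
  have hzero : Tendsto (fun N => conjDiagonal (P N) (c N)) atTop (𝓝 0) := by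
    simp only [hPc]
    simpa only [zero_pow two_ne_zero, zero_smul, zero_add] using
      ((hinv.pow 2).smul_const (_ : Matrix ι ι 𝕜)).add (hinv.smul_const (_ : Matrix ι ι 𝕜))
  have hlim := hG.tendsto P c hzero
  simp only [hsum] at hlim
  refine (sub_eq_zero.mp (tendsto_nhds_unique ?_ hlim)).symm
  simpa only [zero_pow two_ne_zero, zero_smul, zero_add] using
    (((hinv.pow 2).smul_const (_ : E)).add (hinv.smul_const (_ : E))).add_const _

end IsContinuousFrameFunction

end ContinuousFrameFunction

section LinearExtension

variable {𝕜 ι E : Type*} [Fintype ι] [DecidableEq ι] [AddCommGroup E]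

theorem exists_units_mulVec_single_eq [Field 𝕜] {x : ι → 𝕜} (hx : x ≠ 0) :
    ∃ (P : (Matrix ι ι 𝕜)ˣ) (i : ι), P.val *ᵥ Pi.single i 1 = x := by
  obtain ⟨i, hi⟩ := Function.ne_iff.mp hx
  have hdet : ((1 : Matrix ι ι 𝕜).updateCol i x).det = x i := by
    rw [← cramer_apply, cramer_one, Module.End.one_apply]
  have hunit : IsUnit ((1 : Matrix ι ι 𝕜).updateCol i x) := by
    rw [isUnit_iff_isUnit_det, hdet]
    exact hi.isUnit
  exact ⟨hunit.unit, i, by ext; simp⟩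

theorem apply_single_eq_of_dotProduct_ne_zero [Field 𝕜] [CharZero 𝕜] [Module 𝕜 E]
    {Λ Λ' : (ι → 𝕜) → (ι → 𝕜) →ₗ[𝕜] E} (hswap : ∀ x f, f ⬝ᵥ x ≠ 0 → Λ x f = Λ' f x)
    {f : ι → 𝕜} (hf : f ≠ 0) (i : ι) : Λ (Pi.single i 1) f = Λ' f (Pi.single i 1) := by
  obtain ⟨j, hj⟩ := Function.ne_iff.mp hf
  simp only [Pi.zero_apply] at hj
  rcases eq_or_ne (f i) 0 with hi | hi
  · have hij : i ≠ j := fun h => hj (h ▸ hi)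
    have hline (g : ι → 𝕜) (hgj : g j ≠ 0) (hgij : g i + g j ≠ 0) :
        Λ' g (Pi.single i 1) = (Λ (Pi.single i 1 + Pi.single j 1) - Λ (Pi.single j 1)) g := by
      rw [LinearMap.sub_apply, hswap _ g (by simpa using hgij), hswap _ g (by simpa using hgj),
        ← map_sub, add_sub_cancel_right]
    let g (t : 𝕜) : ι → 𝕜 := f + Pi.single i (t * f j)
    have hfg : f = (2 : 𝕜) • g 1 - g 2 := by
      ext l
      rcases eq_or_ne l i with rfl | hl
      · simp [g, two_mul, hi]
      · simp [g, hl, two_mul]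
    have hg (t : 𝕜) (ht : t ≠ 0) (ht' : t + 1 ≠ 0) : Λ (Pi.single i 1) (g t) =
        (Λ (Pi.single i 1 + Pi.single j 1) - Λ (Pi.single j 1)) (g t) := by
      have hsum : t * f j + f j ≠ 0 := by
        rw [← add_one_mul]
        exact mul_ne_zero ht' hj
      rw [hswap _ _ (by simp [g, hi, hj, ht]), hline _ (by simp [g, hij.symm, hj])
        (by simpa [g, hi, hij.symm] using hsum)]
    rw [hline f hj (by simpa [hi] using hj), hfg, map_sub, map_smul, map_sub, map_smul,
      hg 1 one_ne_zero (by norm_num), hg 2 two_ne_zero (by norm_num)]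
  · exact hswap _ _ (by simpa using hi)

theorem exists_linearMap_apply_vecMulVec {𝕜 ι E : Type*} [Field 𝕜] [CharZero 𝕜] [Fintype ι]
    [AddCommGroup E] [Module 𝕜 E] {G : Matrix ι ι 𝕜 → E}
    (hrow : ∀ x, ∃ Λ : (ι → 𝕜) →ₗ[𝕜] E, ∀ f, f ⬝ᵥ x = 1 → G (vecMulVec x f) = Λ f)
    (hcol : ∀ f, ∃ Λ : (ι → 𝕜) →ₗ[𝕜] E, ∀ x, f ⬝ᵥ x = 1 → G (vecMulVec x f) = Λ x) :
    ∃ L : Matrix ι ι 𝕜 →ₗ[𝕜] E, ∀ x f, f ⬝ᵥ x = 1 → G (vecMulVec x f) = L (vecMulVec x f) := by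
  classical
  choose Λ hΛ using hrow
  choose Λ' hΛ' using hcol
  have hswap (x f : ι → 𝕜) (hfx : f ⬝ᵥ x ≠ 0) : Λ x f = Λ' f x := by
    have h := (hΛ x ((f ⬝ᵥ x)⁻¹ • f) (by simp [hfx])).symm.trans
      ((congrArg G (by simp)).trans (hΛ' f ((f ⬝ᵥ x)⁻¹ • x) (by simp [hfx])))
    simpa [hfx] using h
  refine ⟨∑ i, Λ (Pi.single i 1) ∘ₗ LinearMap.proj i, fun x f hfx => ?_⟩
  have hf : f ≠ 0 := by
    rintro rfl
    simp at hfx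
  calc G (vecMulVec x f) = Λ' f (∑ i, x i • Pi.single i 1) := by
        rw [hΛ' f x hfx, ← pi_eq_sum_univ' x]
    _ = ∑ i, x i • Λ (Pi.single i 1) f := by simp [apply_single_eq_of_dotProduct_ne_zero hswap hf]
    _ = _ := by
        rw [LinearMap.sum_apply]
        exact Finset.sum_congr rfl fun i _ => ((Λ (Pi.single i 1)).map_smul (x i) f).symm

variable [RCLike 𝕜] [Module 𝕜 E] [TopologicalSpace E]

namespace IsContinuousFrameFunction

variable [T2Space E] [ContinuousAdd E] [ContinuousSMul 𝕜 E] {G : Matrix ι ι 𝕜 → E}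

theorem exists_linearMap_apply_single_vecMulVec (hG : IsContinuousFrameFunction G)
    (hι : 3 ≤ Fintype.card ι) (i : ι) : ∃ Λ : (ι → 𝕜) →ₗ[𝕜] E,
      ∀ f, f i = 1 → G (vecMulVec (Pi.single i 1) f) = Λ f := by
  refine ⟨(LinearMap.proj i).smulRight (G (single i i 1)) +
    Fintype.linearCombination 𝕜 (fun j => increment G i j 1) ∘ₗ
      (LinearMap.id - (LinearMap.proj i).smulRight (Pi.single i 1)), fun f hf => ?_⟩
  have hw : (f - Pi.single i 1 : ι → 𝕜) i = 0 := by simp [hf]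
  have hincrement (j : ι) : increment G i j ((f - Pi.single i 1 : ι → 𝕜) j) =
      (f - Pi.single i 1 : ι → 𝕜) j • increment G i j 1 := by
    rcases eq_or_ne i j with rfl | hij
    · simp [hf]
    · exact hG.increment_eq_smul hι hij _
  have hsum := hG.isFrameFunction.map_add_vecMulVec hw
  rw [← vecMulVec_single_single i i 1, ← vecMulVec_add, add_sub_cancel, vecMulVec_single_single]
    at hsum
  simp only [hsum, hincrement]
  simp [hf, Fintype.linearCombination_apply]

theorem exists_linearMap_apply_vecMulVec_left (hG : IsContinuousFrameFunction G)
    (hι : 3 ≤ Fintype.card ι) (x : ι → 𝕜) : ∃ Λ : (ι → 𝕜) →ₗ[𝕜] E,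
      ∀ f, f ⬝ᵥ x = 1 → G (vecMulVec x f) = Λ f := by
  rcases eq_or_ne x 0 with rfl | hx
  · exact ⟨0, by simp⟩
  obtain ⟨P, i, rfl⟩ := exists_units_mulVec_single_eq hx
  obtain ⟨Λ, hΛ⟩ := (hG.comp_conj P).exists_linearMap_apply_single_vecMulVec hι i
  refine ⟨Λ ∘ₗ vecMulLinear P.val, fun f hf => ?_⟩
  have hconj := hΛ (f ᵥ* P.val) (by rwa [dotProduct_mulVec, dotProduct_single_one] at hf)
  simpa [mul_vecMulVec, vecMulVec_mul] using hconj

theorem exists_linearMap_apply_conjDiagonal_single (hG : IsContinuousFrameFunction G)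
    (hι : 3 ≤ Fintype.card ι) : ∃ L : Matrix ι ι 𝕜 →ₗ[𝕜] E, ∀ P i,
      G (conjDiagonal P (Pi.single i 1)) = L (conjDiagonal P (Pi.single i 1)) := by
  have hcol (f : ι → 𝕜) : ∃ Λ : (ι → 𝕜) →ₗ[𝕜] E, ∀ x, f ⬝ᵥ x = 1 → G (vecMulVec x f) = Λ x := by
    simpa [dotProduct_comm f] using hG.comp_transpose.exists_linearMap_apply_vecMulVec_left hι f
  obtain ⟨L, hL⟩ := exists_linearMap_apply_vecMulVec
    (hG.exists_linearMap_apply_vecMulVec_left hι) hcol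
  refine ⟨L, fun P i => ?_⟩
  rw [conjDiagonal_single, ← vecMulVec_single_single, mul_vecMulVec, vecMulVec_mul]
  exact hL _ _ (by rw [dotProduct_mulVec, vecMul_vecMul, Units.inv_mul, vecMul_one,
    single_one_dotProduct, Pi.single_eq_same])

end IsContinuousFrameFunction

end LinearExtension

section LinearPreserver

variable {ι : Type*} [Fintype ι] [DecidableEq ι] {ψ : Matrix ι ι ℂ → Matrix ι ι ℂ}

theorem map_one_add_conjDiagonal_sub_one {P Q : (Matrix ι ι ℂ)ˣ}
    (hQ : ∀ d, (∀ i, d i ≠ 0) → ψ (conjDiagonal P d) = conjDiagonal Q d) {c : ι → ℂ}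
    (hc : ∀ i, 1 + c i ≠ 0) : ψ (1 + conjDiagonal P c) - 1 = conjDiagonal Q c := by
  have h := hQ (1 + c) hc
  rw [map_add, map_add, map_one, map_one] at h
  rw [h, add_sub_cancel_left]

theorem map_one_add_conjDiagonal_single_sub_one {P Q : (Matrix ι ι ℂ)ˣ}
    (hQ : ∀ d, (∀ i, d i ≠ 0) → ψ (conjDiagonal P d) = conjDiagonal Q d) (i : ι) :
    ψ (1 + conjDiagonal P (Pi.single i 1)) - 1 = conjDiagonal Q (Pi.single i 1) :=
  map_one_add_conjDiagonal_sub_one hQ fun j => by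
    rcases eq_or_ne j i with rfl | hj
    · norm_num
    · simp [hj]

theorem eventually_forall_one_add_ne_zero {P : ℕ → (Matrix ι ι ℂ)ˣ} {c : ℕ → ι → ℂ}
    (hP : Tendsto (fun N => conjDiagonal (P N) (c N)) atTop (𝓝 0)) :
    ∀ᶠ N in atTop, ∀ i, 1 + c N i ≠ 0 := by
  have hdet : Tendsto (fun N => (conjDiagonal (P N) (1 + c N)).det) atTop (𝓝 1) := by
    simp only [map_add, map_one]
    have hadd := hP.const_add 1
    rw [add_zero] at hadd
    simpa [Function.comp_def] using (continuous_id.matrix_det.tendsto (1 : Matrix ι ι ℂ)).comp hadd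
  filter_upwards [hdet.eventually_ne one_ne_zero] with N hN
  exact isUnit_conjDiagonal_iff.mp ((isUnit_iff_isUnit_det _).mpr hN.isUnit)

namespace IsPreserver

theorem isFrameFunction (hψ : IsPreserver ψ) : IsFrameFunction fun X => ψ (1 + X) - 1 := by
  have hsum (P : (Matrix ι ι ℂ)ˣ) : ∑ i, (ψ (1 + conjDiagonal P (Pi.single i 1)) - 1) = 1 := by
    obtain ⟨Q, hQ⟩ := hψ.exists_forall_eq_conjDiagonal P
    simpa [map_one_add_conjDiagonal_single_sub_one hQ] using (conjDiagonal_eq_sum Q 1).symm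
  intro P
  have hP := (hsum P).trans (hsum 1).symm
  simpa [conjDiagonal_single] using hP

theorem tendsto_map_one_add_sub_one (hψ : IsPreserver ψ) {P : ℕ → (Matrix ι ι ℂ)ˣ}
    {c : ℕ → ι → ℂ} (hP : Tendsto (fun N => conjDiagonal (P N) (c N)) atTop (𝓝 0)) :
    Tendsto (fun N => ψ (1 + conjDiagonal (P N) (c N)) - 1) atTop (𝓝 0) := by
  have hone_mem : (1 : Matrix ι ι ℂ) ∈ invertibleSemisimple ι :=
    mem_invertibleSemisimple_iff.mpr ⟨1, 1, by simp, map_one _⟩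
  have hone : ψ 1 = 1 := by
    obtain ⟨Q, hQ⟩ := hψ.exists_forall_eq_conjDiagonal 1
    simpa only [map_one] using hQ 1 fun _ => one_ne_zero
  have hadd : Tendsto (fun N => 1 + conjDiagonal (P N) (c N)) atTop
      (𝓝[invertibleSemisimple ι] 1) := by
    refine tendsto_nhdsWithin_iff.mpr ⟨by simpa using hP.const_add 1, ?_⟩
    filter_upwards [eventually_forall_one_add_ne_zero hP] with N hN
    exact mem_invertibleSemisimple_iff.mpr ⟨P N, 1 + c N, hN, by rw [map_add, map_one]⟩
  simpa [hone] using ((hψ.continuousOn 1 hone_mem).tendsto.comp hadd).sub_const 1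

theorem isContinuousFrameFunction (hψ : IsPreserver ψ) :
    IsContinuousFrameFunction fun X => ψ (1 + X) - 1 where
  isFrameFunction := hψ.isFrameFunction
  tendsto P c hP := by
    choose Q hQ using fun N => hψ.exists_forall_eq_conjDiagonal (P N)
    refine (hψ.tendsto_map_one_add_sub_one hP).congr' ?_
    filter_upwards [eventually_forall_one_add_ne_zero hP] with N hN
    simp only [map_one_add_conjDiagonal_single_sub_one (hQ N),
      map_one_add_conjDiagonal_sub_one (hQ N) hN]
    exact conjDiagonal_eq_sum _ _

theorem exists_linearMap_eqOn (hψ : IsPreserver ψ) (hι : 3 ≤ Fintype.card ι) :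
    ∃ L : Matrix ι ι ℂ →ₗ[ℂ] Matrix ι ι ℂ, Set.EqOn ψ L (invertibleSemisimple ι) ∧
      ∀ P, ∃ Q, ∀ d, L (conjDiagonal P d) = conjDiagonal Q d := by
  obtain ⟨L, hL⟩ := hψ.isContinuousFrameFunction.exists_linearMap_apply_conjDiagonal_single hι
  have hLQ {P Q : (Matrix ι ι ℂ)ˣ}
      (hQ : ∀ d, (∀ i, d i ≠ 0) → ψ (conjDiagonal P d) = conjDiagonal Q d) (d : ι → ℂ) :
      L (conjDiagonal P d) = conjDiagonal Q d := by
    have hext : L ∘ₗ (conjDiagonal P).toLinearMap = (conjDiagonal Q).toLinearMap :=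
      LinearMap.pi_ext' fun i => LinearMap.ext_ring <|
        (hL P i).symm.trans (map_one_add_conjDiagonal_single_sub_one hQ i)
    exact LinearMap.congr_fun hext d
  refine ⟨L, fun X hX => ?_, fun P => ?_⟩
  · obtain ⟨P, d, hd, rfl⟩ := mem_invertibleSemisimple_iff.mp hX
    obtain ⟨Q, hQ⟩ := hψ.exists_forall_eq_conjDiagonal P
    rw [hQ d hd, hLQ hQ]
  · obtain ⟨Q, hQ⟩ := hψ.exists_forall_eq_conjDiagonal P
    exact ⟨Q, hLQ hQ⟩

end IsPreserver

end LinearPreserver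

section JordanHom

/-- A Jordan homomorphism, encoded by preservation of squares; it then also preserves the
symmetrized products `x * y + y * x`. -/
def IsJordanHom {R A B : Type*} [CommRing R] [Ring A] [Ring B] [Module R A] [Module R B]
    (L : A →ₗ[R] B) : Prop :=
  ∀ x, L (x * x) = L x * L x

theorem isJordanHom_of_forall_isSelfAdjoint {A B : Type*} [Ring A] [StarRing A] [Algebra ℂ A]
    [StarModule ℂ A] [Ring B] [Algebra ℂ B] {L : A →ₗ[ℂ] B}
    (hL : ∀ a, IsSelfAdjoint a → L (a * a) = L a * L a) : IsJordanHom L := by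
  intro x
  obtain ⟨a, b, ha, hb, rfl⟩ : ∃ a b : A, IsSelfAdjoint a ∧ IsSelfAdjoint b ∧
      x = a + Complex.I • b :=
    ⟨realPart x, imaginaryPart x, (realPart x).2, (imaginaryPart x).2,
      (realPart_add_I_smul_imaginaryPart x).symm⟩
  have hab := hL _ (ha.add hb)
  simp only [add_mul, mul_add, map_add, hL a ha, hL b hb] at hab
  have hsymm : L (a * b) = L a * L b + L b * L a - L (b * a) := by grind
  simp only [add_mul, mul_add, map_add, map_smul, smul_mul_assoc, mul_smul_comm, hL a ha, hL b hb,
    hsymm]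
  module

theorem exists_units_conj_of_forall_map_single {𝕜 ι : Type*} [Field 𝕜] [Fintype ι]
    [DecidableEq ι] {L : Matrix ι ι 𝕜 →ₗ[𝕜] Matrix ι ι 𝕜} {t : ι → 𝕜} (ht : ∀ i, t i ≠ 0)
    (hL : ∀ i j, L (single i j 1) = single i j ((t i)⁻¹ * t j)) :
    ∃ T : (Matrix ι ι 𝕜)ˣ, ∀ X, L X = T * X * T⁻¹.val := by
  have hext : L = LinearMap.mulLeft 𝕜 (diagonal t⁻¹) ∘ₗ LinearMap.mulRight 𝕜 (diagonal t) :=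
    ext_linearMap 𝕜 fun i j => LinearMap.ext_ring <| by
      ext p q
      simp only [LinearMap.comp_apply, singleLinearMap_apply, hL, single_apply,
        LinearMap.mulRight_apply, LinearMap.mulLeft_apply, diagonal_mul, mul_diagonal, Pi.inv_apply]
      grind
  exact ⟨⟨diagonal t⁻¹, diagonal t, by simp [ht], by simp [ht]⟩, fun X => by simp [hext, mul_assoc]⟩

namespace IsJordanHom

theorem map_mul_add_mul {R A B : Type*} [CommRing R] [Ring A] [Ring B] [Module R A] [Module R B]
    {L : A →ₗ[R] B} (hL : IsJordanHom L) (x y : A) :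
    L (x * y + y * x) = L x * L y + L y * L x := by
  have hxy := hL (x + y)
  simp only [add_mul, mul_add, map_add, hL x, hL y] at hxy ⊢
  grind

section Matrix

variable {𝕜 ι : Type*} [Field 𝕜] [Fintype ι] [DecidableEq ι]
  {L : Matrix ι ι 𝕜 →ₗ[𝕜] Matrix ι ι 𝕜}

theorem map_single (hL : IsJordanHom L) (hdiag : ∀ i, L (single i i 1) = single i i 1) {i j : ι}
    (hij : i ≠ j) : L (single i j 1) =
      single i j (L (single i j 1) i j) + single j i (L (single i j 1) j i) := by
  have hi := hL.map_mul_add_mul (single i i 1) (single i j 1)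
  have hj := hL.map_mul_add_mul (single j j 1) (single i j 1)
  simp only [hdiag, single_mul_single_same, single_mul_single_of_ne _ _ _ _ hij.symm, mul_one,
    add_zero, zero_add] at hi hj
  set M := L (single i j 1)
  calc M = single i i 1 * (single j j 1 * M + M * single j j 1) +
        (single j j 1 * M + M * single j j 1) * single i i 1 := by rw [← hj, ← hi]
    _ = single i i 1 * M * single j j 1 + single j j 1 * M * single i i 1 := by
        rw [mul_add, add_mul, ← mul_assoc, single_mul_single_of_ne _ _ _ _ hij, mul_assoc M,
          single_mul_single_of_ne _ _ _ _ hij.symm, zero_mul, mul_zero, zero_add, add_zero,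
          mul_assoc, mul_assoc]
    _ = single i j (M i j) + single j i (M j i) := by simp

theorem apply_mul_apply_swap_eq_zero (hL : IsJordanHom L)
    (hdiag : ∀ i, L (single i i 1) = single i i 1) {i j : ι} (hij : i ≠ j) :
    L (single i j 1) i j * L (single i j 1) j i = 0 := by
  have h := congr_fun₂ (hL (single i j 1)) i i
  rw [hL.map_single hdiag hij] at h
  simpa [add_mul, mul_add, hij, hij.symm] using h.symm

theorem apply_mul_apply_add_eq_one (hL : IsJordanHom L)
    (hdiag : ∀ i, L (single i i 1) = single i i 1) {i j : ι} (hij : i ≠ j) :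
    L (single i j 1) i j * L (single j i 1) j i +
      L (single i j 1) j i * L (single j i 1) i j = 1 := by
  have h := congr_fun₂ (hL.map_mul_add_mul (single i j 1) (single j i 1)) i i
  rw [hL.map_single hdiag hij, hL.map_single hdiag hij.symm] at h
  rw [mul_comm (L (single i j 1) j i)]
  simpa [add_mul, mul_add, hij, hij.symm, hdiag] using h.symm

theorem map_single_of_ne (hL : IsJordanHom L)
    (hdiag : ∀ i, L (single i i 1) = single i i 1) {i j k : ι} (hij : i ≠ j) (hik : i ≠ k)
    (hjk : j ≠ k) : L (single i k 1) =
      single i k (L (single i j 1) i j * L (single j k 1) j k) +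
      single k i (L (single i j 1) j i * L (single j k 1) k j) := by
  have h := hL.map_mul_add_mul (single i j 1) (single j k 1)
  rw [hL.map_single hdiag hij, hL.map_single hdiag hjk] at h
  simpa [add_mul, mul_add, hij, hij.symm, hjk, hjk.symm, hik, hik.symm, mul_comm] using h

theorem apply_swap_mul_apply_eq_zero (hL : IsJordanHom L)
    (hdiag : ∀ i, L (single i i 1) = single i i 1) {i j k : ι} (hij : i ≠ j) (hik : i ≠ k)
    (hjk : j ≠ k) : L (single i j 1) j i * L (single i k 1) i k = 0 := by
  have h := congr_fun₂ (hL.map_mul_add_mul (single i j 1) (single i k 1)) j k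
  rw [hL.map_single hdiag hij, hL.map_single hdiag hik] at h
  simpa [add_mul, mul_add, hij, hij.symm, hjk, hjk.symm, hik, hik.symm] using h.symm

theorem exists_units_conj_of_apply_swap_eq_zero (hL : IsJordanHom L)
    (hdiag : ∀ i, L (single i i 1) = single i i 1) {i : ι}
    (hi : ∀ k, i ≠ k → L (single i k 1) k i = 0) :
    ∃ T : (Matrix ι ι 𝕜)ˣ, ∀ X, L X = T * X * T⁻¹.val := by
  set t : ι → 𝕜 := fun k => L (single i k 1) i k with ht
  have hti : t i = 1 := by simp [ht, hdiag]
  have hmul (k : ι) (hk : i ≠ k) : t k * L (single k i 1) k i = 1 := by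
    simpa [hi k hk] using hL.apply_mul_apply_add_eq_one hdiag hk
  have ht0 (k : ι) : t k ≠ 0 := by
    rcases eq_or_ne i k with rfl | hk
    · simp [hti]
    · exact left_ne_zero_of_mul_eq_one (hmul k hk)
  have hleft (k : ι) (hk : i ≠ k) : L (single i k 1) = single i k (t k) := by
    simpa [hi k hk] using hL.map_single hdiag hk
  have hright (k : ι) (hk : i ≠ k) : L (single k i 1) = single k i (t k)⁻¹ := by
    have hki : L (single k i 1) k i = (t k)⁻¹ := eq_inv_of_mul_eq_one_right (hmul k hk)
    have hzero := hL.apply_mul_apply_swap_eq_zero hdiag hk.symm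
    rw [hki, mul_eq_zero_iff_left (inv_ne_zero (ht0 k))] at hzero
    simpa [hki, hzero] using hL.map_single hdiag hk.symm
  have hsingle (p q : ι) : L (single p q 1) = single p q ((t p)⁻¹ * t q) := by
    rcases eq_or_ne p q with rfl | hpq
    · simp [hdiag, ht0]
    rcases eq_or_ne i p with rfl | hip
    · simp [hleft q hpq, hti]
    rcases eq_or_ne i q with rfl | hiq
    · simp [hright p hip, hti]
    · rw [hL.map_single_of_ne hdiag hip.symm hpq hiq, hleft q hiq, hright p hip]
      simp [hiq, hip]
  exact exists_units_conj_of_forall_map_single ht0 hsingle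

theorem exists_units_conj_or_transpose (hL : IsJordanHom L)
    (hdiag : ∀ i, L (single i i 1) = single i i 1) :
    ∃ T : (Matrix ι ι 𝕜)ˣ, (∀ X, L X = T * X * T⁻¹.val) ∨ (∀ X, L X = T * Xᵀ * T⁻¹.val) := by
  rcases isEmpty_or_nonempty ι with _ | ⟨⟨i⟩⟩
  · exact ⟨1, .inl fun X => Subsingleton.elim _ _⟩
  by_cases hi : ∀ k, i ≠ k → L (single i k 1) k i = 0
  · obtain ⟨T, hT⟩ := hL.exists_units_conj_of_apply_swap_eq_zero hdiag hi
    exact ⟨T, .inl hT⟩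
  push Not at hi
  obtain ⟨j, hij, hj⟩ := hi
  have hswap (k : ι) (hik : i ≠ k) : L (single i k 1) i k = 0 := by
    rcases eq_or_ne j k with rfl | hjk
    · exact (mul_eq_zero.mp (hL.apply_mul_apply_swap_eq_zero hdiag hij)).resolve_right hj
    · exact (mul_eq_zero.mp (hL.apply_swap_mul_apply_eq_zero hdiag hij hik hjk)).resolve_left hj
  have htranspose : IsJordanHom ((transposeLinearEquiv ι ι 𝕜 𝕜).toLinearMap ∘ₗ L) := fun X => by
    simp [hL X]
  obtain ⟨T, hT⟩ := htranspose.exists_units_conj_of_apply_swap_eq_zero (i := i)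
    (fun k => by simp [hdiag]) (by simpa using hswap)
  have hTL (X : Matrix ι ι 𝕜) : L X = (T⁻¹).valᵀ * Xᵀ * T.valᵀ := by
    rw [← transpose_transpose (L X)]
    exact (congrArg transpose (hT X)).trans (by simp [mul_assoc])
  exact ⟨⟨(T⁻¹).valᵀ, T.valᵀ, by simp [← transpose_mul], by simp [← transpose_mul]⟩, .inr hTL⟩

end Matrix

end IsJordanHom

end JordanHom

section FramePreserving

variable {ι : Type*} [Fintype ι] [DecidableEq ι] {L : Matrix ι ι ℂ →ₗ[ℂ] Matrix ι ι ℂ}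

theorem isJordanHom_of_forall_exists_eq_conjDiagonal
    (hL : ∀ P, ∃ Q, ∀ d, L (conjDiagonal P d) = conjDiagonal Q d) : IsJordanHom L := by
  refine isJordanHom_of_forall_isSelfAdjoint fun H hH => ?_
  obtain ⟨P, d, rfl⟩ : ∃ P d, H = conjDiagonal P d :=
    ⟨Unitary.toUnits hH.isHermitian.eigenvectorUnitary, _, hH.isHermitian.spectral_theorem⟩
  obtain ⟨Q, hQ⟩ := hL P
  rw [← map_mul, hQ, hQ, map_mul]

theorem exists_units_conj_or_transpose_of_forall_exists_eq_conjDiagonal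
    (hL : ∀ P, ∃ Q, ∀ d, L (conjDiagonal P d) = conjDiagonal Q d) :
    ∃ T : (Matrix ι ι ℂ)ˣ, (∀ X, L X = T * X * T⁻¹.val) ∨ (∀ X, L X = T * Xᵀ * T⁻¹.val) := by
  obtain ⟨Q, hQ⟩ := hL 1
  let L' := LinearMap.mulLeft ℂ Q⁻¹.val ∘ₗ LinearMap.mulRight ℂ Q.val ∘ₗ L
  have hL' : IsJordanHom L' := fun X => by
    simp [L', isJordanHom_of_forall_exists_eq_conjDiagonal hL X, mul_assoc]
  have hdiag (i : ι) : L' (single i i 1) = single i i 1 := by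
    have hi := hQ (Pi.single i 1)
    rw [conjDiagonal_one, diagonal_single] at hi
    simp [L', hi, conjDiagonal_single, mul_assoc]
  have hLL' (X : Matrix ι ι ℂ) : L X = Q * L' X * Q⁻¹.val := by simp [L', mul_assoc]
  obtain ⟨T, hT | hT⟩ := hL'.exists_units_conj_or_transpose hdiag
  · exact ⟨Q * T, .inl fun X => by simp [hLL', hT, mul_assoc]⟩
  · exact ⟨Q * T, .inr fun X => by simp [hLL', hT, mul_assoc]⟩

end FramePreserving

section Classification

variable {ι : Type*} [Fintype ι] [DecidableEq ι] {ψ : Matrix ι ι ℂ → Matrix ι ι ℂ}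

theorem IsPreserver.exists_units_conj_or_transpose (hψ : IsPreserver ψ)
    (hι : 3 ≤ Fintype.card ι) : ∃ T : (Matrix ι ι ℂ)ˣ,
      (∀ X ∈ invertibleSemisimple ι, ψ X = T * X * T⁻¹.val) ∨
        (∀ X ∈ invertibleSemisimple ι, ψ X = T * Xᵀ * T⁻¹.val) := by
  obtain ⟨L, hψL, hL⟩ := hψ.exists_linearMap_eqOn hι
  obtain ⟨T, hT⟩ := exists_units_conj_or_transpose_of_forall_exists_eq_conjDiagonal hL
  exact ⟨T, hT.imp (fun h X hX => (hψL hX).trans (h X)) fun h X hX => (hψL hX).trans (h X)⟩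

theorem isPreserver_conj (T : (Matrix ι ι ℂ)ˣ) :
    IsPreserver fun X : Matrix ι ι ℂ => T * X * T⁻¹.val where
  continuousOn := by fun_prop
  commute _ _ _ _ h := h.map (MulSemiringAction.toRingHom _ (Matrix ι ι ℂ) (ConjAct.toConjAct T))
  spectrum_subset _ _ := (spectrum.units_conjugate).subset

theorem spectrum_transpose {𝕜 : Type*} [Field 𝕜] (A : Matrix ι ι 𝕜) :
    spectrum 𝕜 Aᵀ = spectrum 𝕜 A := by
  ext z
  rw [mem_spectrum_iff_isRoot_charpoly, charpoly_transpose, ← mem_spectrum_iff_isRoot_charpoly]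

theorem isPreserver_conj_transpose (T : (Matrix ι ι ℂ)ˣ) :
    IsPreserver fun X : Matrix ι ι ℂ => T * Xᵀ * T⁻¹.val where
  continuousOn := by fun_prop
  commute X _ Y _ h := by
    have hXY : Commute Xᵀ Yᵀ := by rw [commute_iff_eq, ← transpose_mul, ← transpose_mul, h.eq]
    exact hXY.map (MulSemiringAction.toRingHom _ (Matrix ι ι ℂ) (ConjAct.toConjAct T))
  spectrum_subset X _ := by rw [spectrum.units_conjugate, spectrum_transpose]

theorem isPreserver_iff {φ : invertibleSemisimple ι → Matrix ι ι ℂ} (hφ : ∀ X, φ X = ψ X) :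
    IsPreserver ψ ↔ Continuous φ ∧
      (∀ X Y, X.val * Y.val = Y.val * X.val → φ X * φ Y = φ Y * φ X) ∧
      (∀ X, spectrum ℂ (φ X) ⊆ spectrum ℂ X.val) := by
  obtain rfl : φ = (invertibleSemisimple ι).domRestrict ψ := funext hφ
  constructor
  · intro h
    exact ⟨continuousOn_iff_continuous_domRestrict.mp h.continuousOn,
      fun X Y => h.commute X X.2 Y Y.2, fun X => h.spectrum_subset X X.2⟩
  · rintro ⟨hcont, hcomm, hspec⟩
    exact ⟨continuousOn_iff_continuous_domRestrict.mpr hcont,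
      fun X hX Y hY => hcomm ⟨X, hX⟩ ⟨Y, hY⟩, fun X hX => hspec ⟨X, hX⟩⟩

end Classification

end SpectrumShrinking

open SpectrumShrinking in
theorem preserver_GLn_ss_iff_general {ι : Type*} [Fintype ι] [DecidableEq ι]
    (hι : 3 ≤ Fintype.card ι) (φ : invertibleSemisimple ι → Matrix ι ι ℂ) :
    (Continuous φ ∧
      (∀ X Y, X.val * Y.val = Y.val * X.val → φ X * φ Y = φ Y * φ X) ∧
      (∀ X, spectrum ℂ (φ X) ⊆ spectrum ℂ X.val)) ↔
    (∃ T : Matrix ι ι ℂ, IsUnit T ∧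
      ((∀ X, φ X = T * X.val * T⁻¹) ∨ (∀ X, φ X = T * X.val.transpose * T⁻¹))) := by
  constructor
  · intro hφ
    have hext (X : invertibleSemisimple ι) : φ X = Function.extend Subtype.val φ 0 X :=
      (Subtype.val_injective.extend_apply φ 0 X).symm
    obtain ⟨T, hT⟩ := ((isPreserver_iff hext).mpr hφ).exists_units_conj_or_transpose hι
    refine ⟨T, T.isUnit, ?_⟩
    rw [← coe_units_inv]
    exact hT.imp (fun h X => (hext X).trans (h X X.2)) fun h X => (hext X).trans (h X X.2)
  · rintro ⟨T, hT, h⟩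
    lift T to (Matrix ι ι ℂ)ˣ using hT
    rw [← coe_units_inv] at h
    exact h.elim (fun h => (isPreserver_iff h).mp (isPreserver_conj T)) fun h =>
      (isPreserver_iff h).mp (isPreserver_conj_transpose T)

/-- For `n ≥ 3`, a map `φ : GL(n)_ss → M_n` on the set of
diagonalizable invertible matrices is continuous, commutativity-preserving and
spectrum-shrinking **iff** it is of the form `φ(X) = T X T⁻¹` or `φ(X) = T Xᵗ T⁻¹`
for some `T ∈ GL(n)`. -/
theorem preserver_GLn_ss_iff (n : ℕ) (hn : 3 ≤ n)
    (φ : {X : Matrix (Fin n) (Fin n) ℂ // IsUnit X ∧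
        ∃ P : Matrix (Fin n) (Fin n) ℂ, ∃ d : Fin n → ℂ,
          IsUnit P ∧ X = P * Matrix.diagonal d * P⁻¹} → Matrix (Fin n) (Fin n) ℂ) :
    (Continuous φ ∧
      (∀ X Y, X.val * Y.val = Y.val * X.val → φ X * φ Y = φ Y * φ X) ∧
      (∀ X, spectrum ℂ (φ X) ⊆ spectrum ℂ X.val)) ↔
    (∃ T : Matrix (Fin n) (Fin n) ℂ, IsUnit T ∧
      ((∀ X, φ X = T * X.val * T⁻¹) ∨ (∀ X, φ X = T * X.val.transpose * T⁻¹))) :=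
  preserver_GLn_ss_iff_general (by rwa [Fintype.card_fin]) φ
end

section
/- Let n ≥ 1, let S, T ∈ GL(n) be positive definite matrices and let N, M be normal n×n complex matrices. If S N S⁻¹ = T M T⁻¹, then S⁻¹ N S = T⁻¹ M T. Moreover, if S N S⁻¹ and T M T⁻¹ commute, then S⁻¹ N S and T⁻¹ M T commute. Consequently, the assignment Θ(S N S⁻¹) := S⁻¹ N S is a well-defined, spectrum-preserving and commutativity-preserving map on the set of diagonalizable invertible matrices. -/
open Matrix
open scoped ComplexOrder

/-!
Put `Θ (s a s⁻¹) = (s a⋆ s⁻¹)⋆ = (s⋆)⁻¹ a s⋆`, which is `s⁻¹ a s` when `s` is self-adjoint. By the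
Fuglede–Putnam theorem, every `x` intertwining `s a s⁻¹` and `t b t⁻¹` with `a`, `b` normal also
intertwines `s a⋆ s⁻¹` and `t b⋆ t⁻¹`. Taking `x = 1` shows that `Θ` is well defined; applying this
twice to commuting elements, and then taking adjoints, shows that `Θ` preserves commutativity.
-/

theorem semiconjBy_units_conj_iff {M : Type*} [Monoid M] {s t : Mˣ} {x a b : M} :
    SemiconjBy x (s * a * ↑s⁻¹) (t * b * ↑t⁻¹) ↔ SemiconjBy (↑t⁻¹ * (x * s)) a b := by
  constructor <;> intro h
  · exact (t.mk_semiconjBy b).units_inv_symm_left.mul_left (h.mul_left (s.mk_semiconjBy a))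
  · simpa [mul_assoc] using
      (t.mk_semiconjBy b).mul_left (h.mul_left (s.mk_semiconjBy a).units_inv_symm_left)

theorem star_units_conj_star {M : Type*} [Monoid M] [StarMul M] (s : Mˣ) (a : M) :
    star (s * star a * ↑s⁻¹) = ↑(star s)⁻¹ * a * ↑(star s) := by
  simp [mul_assoc]

section CStarAlgebra

variable {A : Type*} [CStarAlgebra A] {a b : A} [IsStarNormal a] [IsStarNormal b]

theorem semiconjBy_units_conj_star {s t : Aˣ} {x : A}
    (h : SemiconjBy x (s * a * ↑s⁻¹) (t * b * ↑t⁻¹)) :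
    SemiconjBy x (s * star a * ↑s⁻¹) (t * star b * ↑t⁻¹) := by
  rw [semiconjBy_units_conj_iff] at h ⊢
  exact h.star_right ‹_› ‹_›

theorem star_units_conj_eq_of_units_conj_eq {s t : Aˣ} (h : s * a * ↑s⁻¹ = t * b * ↑t⁻¹) :
    ↑(star s)⁻¹ * a * ↑(star s) = ↑(star t)⁻¹ * b * ↑(star t) := by
  have h_star : s * star a * ↑s⁻¹ = t * star b * ↑t⁻¹ := by
    have h_one : SemiconjBy 1 (s * a * ↑s⁻¹) (t * b * ↑t⁻¹) := h ▸ SemiconjBy.one_left _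
    simpa only [SemiconjBy, one_mul, mul_one] using semiconjBy_units_conj_star h_one
  simpa only [star_units_conj_star] using congrArg star h_star

theorem commute_star_units_conj {s t : Aˣ} (h : Commute (s * a * ↑s⁻¹) (t * b * ↑t⁻¹)) :
    Commute (↑(star s)⁻¹ * a * ↑(star s)) (↑(star t)⁻¹ * b * ↑(star t)) := by
  have h_right : Commute (s * a * ↑s⁻¹) (t * star b * ↑t⁻¹) := semiconjBy_units_conj_star h
  have h_both : Commute (s * star a * ↑s⁻¹) (t * star b * ↑t⁻¹) :=
    (semiconjBy_units_conj_star h_right.symm).symm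
  simpa only [star_units_conj_star] using h_both.star_star

end CStarAlgebra

theorem putnam_fuglede_theta_general {A : Type*} [CStarAlgebra A] (s t : Aˣ) (a b : A)
    [IsStarNormal a] [IsStarNormal b] :
    (s * a * ↑s⁻¹ = t * b * ↑t⁻¹ →
      ↑(star s)⁻¹ * a * ↑(star s) = ↑(star t)⁻¹ * b * ↑(star t)) ∧
    (Commute (s * a * ↑s⁻¹) (t * b * ↑t⁻¹) →
      Commute (↑(star s)⁻¹ * a * ↑(star s)) (↑(star t)⁻¹ * b * ↑(star t))) ∧
    spectrum ℂ (↑(star s)⁻¹ * a * ↑(star s)) = spectrum ℂ (s * a * ↑s⁻¹) :=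
  ⟨star_units_conj_eq_of_units_conj_eq, commute_star_units_conj,
    spectrum.units_conjugate'.trans spectrum.units_conjugate.symm⟩

/-- (Putnam–Fuglede application.)  Let `S, T` be positive definite
invertible matrices and `N, M` normal matrices.  If `S N S⁻¹ = T M T⁻¹` then
`S⁻¹ N S = T⁻¹ M T`; if `S N S⁻¹` and `T M T⁻¹` commute then so do `S⁻¹ N S` and
`T⁻¹ M T`; and the resulting assignment `Θ(S N S⁻¹) = S⁻¹ N S` is spectrum-preserving. -/
theorem putnam_fuglede_theta (n : ℕ) (hn : 1 ≤ n)
    (S T N M : Matrix (Fin n) (Fin n) ℂ)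
    (hS : S.PosDef) (hT : T.PosDef) (hSunit : IsUnit S) (hTunit : IsUnit T)
    (hN : N * N.conjTranspose = N.conjTranspose * N)
    (hM : M * M.conjTranspose = M.conjTranspose * M) :
    (S * N * S⁻¹ = T * M * T⁻¹ → S⁻¹ * N * S = T⁻¹ * M * T) ∧
    ((S * N * S⁻¹) * (T * M * T⁻¹) = (T * M * T⁻¹) * (S * N * S⁻¹) →
      (S⁻¹ * N * S) * (T⁻¹ * M * T) = (T⁻¹ * M * T) * (S⁻¹ * N * S)) ∧
    spectrum ℂ (S⁻¹ * N * S) = spectrum ℂ (S * N * S⁻¹) := by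
  lift S to (Matrix (Fin n) (Fin n) ℂ)ˣ using hSunit
  lift T to (Matrix (Fin n) (Fin n) ℂ)ˣ using hTunit
  have hS_star : star S = S := Units.ext hS.isHermitian
  have hT_star : star T = T := Units.ext hT.isHermitian
  have : IsStarNormal N := ⟨hN.symm⟩
  have : IsStarNormal M := ⟨hM.symm⟩
  open scoped Matrix.Norms.L2Operator in
  simpa only [hS_star, hT_star, coe_units_inv, commute_iff_eq] using
    putnam_fuglede_theta_general S T N M
end
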